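/- arXiv:math/0201048 — 5 statements merged into one kernel-verified Lean document; each statement's English description precedes it below -/
import Mathlib

section
/- Let K be a convex body contained in the cube [-1,1]^n, let 1 < p < ∞ and 0 < t < 1. Then log N(K, n^{1/p} B_p^n, t) ≤ C p² log²(2/t) · VC(K, c t), where C, c > 0 are absolute constants, B_p^n is the unit ball of ℓ_p^n, N(K, B, t) is the minimal number of translates of tB needed to cover K, and VC(K, s) is the VC dimension of K at scale s. -/
/-!
The covering number is at most the cardinality `N` of a maximal separated set `F ⊆ K`, so it
suffices to bound `log N`. Write `d` for the VC dimension of `K` at scale `t / 4`.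

Two points of `F` differ by at least `t / 2` on a proportion `θ ≈ (t / 2) ^ p` of the coordinates
(`card_far_coords`). A random sample of `k ≈ log N / θ` coordinates preserves this property, up to
a constant factor in `θ`, for all pairs simultaneously (`exists_sample`). Now place `B ≈ 1 / t`
equally spaced thresholds in `[-1, 1]` and count the patterns of thresholds shattered by `F` on
the sampled coordinates.

* From below: averaging yields one coordinate and one threshold such that both the part of `F`
  below it and the part above it have size `≳ N * θ / B` (`exists_big_sides`). The numbers of
  patterns shattered by the two parts add up (`card_shatSet_add_le`), so iteration gives at least
  `2 ^ r` shattered patterns with `r ≈ log N / log (B / θ)` (`two_pow_le_card_shatSet`).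
* From above: by convexity and the Hahn-Banach theorem, a shattered pattern produces a cube of
  side `t / 4` in a coordinate projection of `K`, hence carries at most `d` thresholds
  (`support_le_vcDim`), and there are at most `(e * B * k / d) ^ d` such patterns
  (`card_le_of_support_le`).

Since `log (B / θ) ≲ p * log (2 / t) =: Q`, comparison gives `L ≲ Q * (Q + log L)` for
`L = log N / d`, which forces `L ≲ Q ^ 2` (`log_le_of_counts`).
-/

open Pointwise

/-- The covering number `N(K, B, t)`: the minimal number of translates of `t • B`
needed to cover `K`. -/
noncomputable def covN {V : Type*} [AddCommGroup V] [Module ℝ V]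
    (K B : Set V) (t : ℝ) : ℕ :=
  sInf {m : ℕ | ∃ s : Finset V, s.card = m ∧ K ⊆ ⋃ c ∈ s, (fun y => c + y) '' (t • B)}

/-- The VC dimension of `K ⊆ ℝⁿ` at scale `s`: the maximal cardinality of a set `σ` of
coordinates such that the coordinate projection of `K` onto `σ` contains a coordinate cube
`x + [0, s]^σ`. -/
noncomputable def vcDim {n : ℕ} (K : Set (Fin n → ℝ)) (s : ℝ) : ℕ :=
  sSup {m : ℕ | ∃ σ : Finset (Fin n), σ.card = m ∧ ∃ x : Fin n → ℝ,
    ∀ z : Fin n → ℝ, (∀ i ∈ σ, z i ∈ Set.Icc (x i) (x i + s)) →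
      ∃ k ∈ K, ∀ i ∈ σ, k i = z i}

/-- The cube `B_∞ⁿ = [-1,1]ⁿ`. -/
def cubeBall (n : ℕ) : Set (Fin n → ℝ) := {x | ∀ i, |x i| ≤ 1}

/-- The unit ball of `ℓ_pⁿ`. -/
noncomputable def pBall (n : ℕ) (p : ℝ) : Set (Fin n → ℝ) := {x | ∑ i, |x i| ^ p ≤ 1}

/-! ### Shattered threshold patterns -/

/-- A pattern `u` assigns to each coordinate either no threshold or one of the levels `τ v`.
A finite family `F` shatters `u` with gap `s` if, for every prescription `E` of signs, some
member of `F` is `≥ τ v + s` at the coordinates of `E` that carry a threshold and `≤ τ v` at the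
other coordinates that carry one. Here `e f j` is the value of the `j`-th coordinate of `f`. -/
def Shat {α ι : Type*} {B : ℕ} (e : α → ι → ℝ) (τ : Fin B → ℝ) (s : ℝ) (F : Finset α)
    (u : ι → Option (Fin B)) : Prop :=
  ∀ E : Finset ι, ∃ f ∈ F, ∀ j v, u j = some v →
    (j ∈ E → τ v + s ≤ e f j) ∧ (j ∉ E → e f j ≤ τ v)

theorem Shat.mono {α ι : Type*} {B : ℕ} {e : α → ι → ℝ} {τ : Fin B → ℝ} {s : ℝ}
    {F G : Finset α} (h : F ⊆ G) {u : ι → Option (Fin B)} (hu : Shat e τ s F u) :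
    Shat e τ s G u := by
  intro E
  obtain ⟨f, hf, h'⟩ := hu E
  exact ⟨f, h hf, h'⟩

open Classical in
/-- The finite set of all patterns shattered by `F` with gap `s`. -/
noncomputable def shatSet {α ι : Type*} [Fintype ι] {B : ℕ} (e : α → ι → ℝ) (τ : Fin B → ℝ)
    (s : ℝ) (F : Finset α) : Finset (ι → Option (Fin B)) :=
  Finset.univ.filter (Shat e τ s F)

/-- If two subfamilies lie on opposite sides of the threshold `τ v` at the coordinate `x`, then a
pattern shattered by both has no threshold at `x`, and it remains shattered by `F` when `v` is
inserted there. The enlarged pattern is shattered by neither subfamily, so patterns counted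
twice on the left are compensated by new ones on the right. -/
theorem card_shatSet_add_le {α ι : Type*} [Fintype ι] {B : ℕ} {e : α → ι → ℝ}
    {τ : Fin B → ℝ} {s : ℝ} (hs : 0 < s) {F F₁ F₂ : Finset α} (h₁ : F₁ ⊆ F) (h₂ : F₂ ⊆ F)
    (x : ι) (v : Fin B) (hF₁ : ∀ f ∈ F₁, e f x ≤ τ v) (hF₂ : ∀ f ∈ F₂, τ v + s ≤ e f x) :
    (shatSet e τ s F₁).card + (shatSet e τ s F₂).card ≤ (shatSet e τ s F).card := by
  classical
  have hnone : ∀ u, Shat e τ s F₁ u → Shat e τ s F₂ u → u x = none := by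
    intro u hu₁ hu₂
    by_contra hne
    obtain ⟨w, hw⟩ := Option.ne_none_iff_exists'.mp hne
    obtain ⟨f, hf, hf'⟩ := hu₁ Finset.univ
    obtain ⟨g, hg, hg'⟩ := hu₂ ∅
    have a1 := (hf' x w hw).1 (Finset.mem_univ _)
    have a2 := (hg' x w hw).2 (Finset.notMem_empty _)
    have a3 := hF₁ f hf
    have a4 := hF₂ g hg
    linarith
  set S₁ := shatSet e τ s F₁ with hS₁
  set S₂ := shatSet e τ s F₂ with hS₂
  have hinj : Set.InjOn (fun u : ι → Option (Fin B) => Function.update u x (some v))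
      (S₁ ∩ S₂ : Finset _) := by
    intro u hu w hw huw
    simp only [hS₁, hS₂, shatSet, Finset.coe_inter, Set.mem_inter_iff, Finset.mem_coe,
      Finset.mem_filter, Finset.mem_univ, true_and] at hu hw
    funext j
    by_cases hj : j = x
    · subst hj
      rw [hnone u hu.1 hu.2, hnone w hw.1 hw.2]
    · have := congrFun huw j
      simpa [Function.update_of_ne hj] using this
  have hdisj : Disjoint (S₁ ∪ S₂)
      ((S₁ ∩ S₂).image (fun u => Function.update u x (some v))) := by
    rw [Finset.disjoint_left]
    intro u hu hu'
    obtain ⟨w, -, rfl⟩ := Finset.mem_image.mp hu'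
    rcases Finset.mem_union.mp hu with h | h
    · simp only [hS₁, shatSet, Finset.mem_filter, Finset.mem_univ, true_and] at h
      obtain ⟨f, hf, hf'⟩ := h Finset.univ
      have := (hf' x v (by simp)).1 (Finset.mem_univ _)
      linarith [hF₁ f hf]
    · simp only [hS₂, shatSet, Finset.mem_filter, Finset.mem_univ, true_and] at h
      obtain ⟨f, hf, hf'⟩ := h ∅
      have := (hf' x v (by simp)).2 (Finset.notMem_empty _)
      linarith [hF₂ f hf]
  have hsub : (S₁ ∪ S₂) ∪ ((S₁ ∩ S₂).image (fun u => Function.update u x (some v)))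
      ⊆ shatSet e τ s F := by
    intro u hu
    simp only [hS₁, hS₂, shatSet, Finset.mem_union, Finset.mem_image, Finset.mem_inter,
      Finset.mem_filter, Finset.mem_univ, true_and] at hu ⊢
    rcases hu with (hu | hu) | ⟨w, ⟨hw₁, hw₂⟩, rfl⟩
    · exact hu.mono h₁
    · exact hu.mono h₂
    · intro E
      by_cases hx : x ∈ E
      · obtain ⟨f, hf, hf'⟩ := hw₂ E
        refine ⟨f, h₂ hf, fun j v' hj => ?_⟩
        by_cases hjx : j = x
        · subst hjx
          obtain rfl : v = v' := by simpa using hj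
          exact ⟨fun _ => hF₂ f hf, fun h => absurd hx h⟩
        · exact hf' j v' (by simpa [Function.update_of_ne hjx] using hj)
      · obtain ⟨f, hf, hf'⟩ := hw₁ E
        refine ⟨f, h₁ hf, fun j v' hj => ?_⟩
        by_cases hjx : j = x
        · subst hjx
          obtain rfl : v = v' := by simpa using hj
          exact ⟨fun h => absurd h hx, fun _ => hF₁ f hf⟩
        · exact hf' j v' (by simpa [Function.update_of_ne hjx] using hj)
  have := Finset.card_le_card hsub
  rw [Finset.card_union_of_disjoint hdisj, Finset.card_image_of_injOn hinj,
    Finset.card_union_add_card_inter] at this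
  exact this

open Classical in
/-- If any two members of `F` are separated by thresholds at a proportion `θ` of the coordinates,
then double counting the triples (ordered pair, coordinate, threshold) gives a single threshold
with a proportion `≳ θ / B` of `F` on either side. The bound does not involve the number of
coordinates. -/
theorem exists_big_sides {α ι : Type*} [Fintype ι] [Nonempty ι] {B : ℕ} (hB : 0 < B)
    {e : α → ι → ℝ} {τ : Fin B → ℝ} {s θ : ℝ} {F : Finset α} (hN : 2 ≤ F.card) (hθ : 0 < θ)
    (hsep : ∀ f ∈ F, ∀ g ∈ F, f ≠ g → θ * Fintype.card ι ≤
      ((Finset.univ.filter fun j => ∃ v, (e f j ≤ τ v ∧ τ v + s ≤ e g j) ∨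
        (e g j ≤ τ v ∧ τ v + s ≤ e f j)).card : ℝ)) :
    ∃ (x : ι) (v : Fin B), F.card * θ / (4 * B) ≤ ((F.filter fun f => e f x ≤ τ v).card : ℝ) ∧
      F.card * θ / (4 * B) ≤ ((F.filter fun f => τ v + s ≤ e f x).card : ℝ) := by
  by_contra! hcon
  set N : ℝ := (F.card : ℝ) with hNdef
  set k : ℝ := (Fintype.card ι : ℝ) with hk
  have hN2 : (2 : ℝ) ≤ N := by rw [hNdef]; exact_mod_cast hN
  have hkpos : 0 < k := by rw [hk]; exact_mod_cast Fintype.card_pos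
  have hBpos : (0 : ℝ) < B := by exact_mod_cast hB
  -- the number of pairs (coordinate, threshold) having `f` below and `g` above
  let c : α → α → ℝ := fun f g => ∑ q : ι × Fin B,
    (if e f q.1 ≤ τ q.2 then 1 else 0) * (if τ q.2 + s ≤ e g q.1 then (1 : ℝ) else 0)
  have hc0 : ∀ f g, 0 ≤ c f g := fun f g => Finset.sum_nonneg fun q _ => by positivity
  have hc : ∀ f ∈ F, ∀ g ∈ F, f ≠ g → θ * k ≤ c f g + c g f := by
    intro f hf g hg hfg
    refine (hsep f hf g hg hfg).trans ?_
    simp only [c]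
    rw [← Finset.sum_add_distrib, Fintype.sum_prod_type, Finset.card_filter]
    push_cast
    refine Finset.sum_le_sum fun j _ => ?_
    split_ifs with h
    · obtain ⟨v, hv⟩ := h
      refine le_trans ?_ (Finset.single_le_sum (f := fun v : Fin B =>
        (if e f j ≤ τ v then 1 else 0) * (if τ v + s ≤ e g j then (1 : ℝ) else 0) +
        (if e g j ≤ τ v then 1 else 0) * (if τ v + s ≤ e f j then (1 : ℝ) else 0))
        (fun v _ => by positivity) (Finset.mem_univ v))
      rcases hv with ⟨h1, h2⟩ | ⟨h1, h2⟩
      · simp only [h1, h2, if_true]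
        have : (0:ℝ) ≤ (if e g j ≤ τ v then 1 else 0) * (if τ v + s ≤ e f j then (1 : ℝ) else 0) :=
          by positivity
        linarith
      · simp only [h1, h2, if_true]
        have : (0:ℝ) ≤ (if e f j ≤ τ v then 1 else 0) * (if τ v + s ≤ e g j then (1 : ℝ) else 0) :=
          by positivity
        linarith
    · exact Finset.sum_nonneg fun v _ => by positivity
  have hlow : θ * k * (N * (N - 1)) ≤ 2 * ∑ f ∈ F, ∑ g ∈ F, c f g := by
    have h1 : ∑ f ∈ F, ∑ g ∈ F, (c f g + c g f) = 2 * ∑ f ∈ F, ∑ g ∈ F, c f g := by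
      simp only [Finset.sum_add_distrib]
      rw [Finset.sum_comm (f := fun f g => c g f)]
      ring
    rw [← h1]
    have h2 : ∀ f ∈ F, θ * k * (N - 1) ≤ ∑ g ∈ F, (c f g + c g f) := by
      intro f hf
      rw [← Finset.add_sum_erase F _ hf]
      have : ∑ g ∈ F.erase f, θ * k ≤ ∑ g ∈ F.erase f, (c f g + c g f) :=
        Finset.sum_le_sum fun g hg => hc f hf g (Finset.mem_of_mem_erase hg)
          (Finset.ne_of_mem_erase hg).symm
      rw [Finset.sum_const, Finset.card_erase_of_mem hf, nsmul_eq_mul,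
        Nat.cast_sub (by omega), Nat.cast_one] at this
      have := hc0 f f
      linarith
    have := Finset.sum_le_sum h2
    rw [Finset.sum_const, nsmul_eq_mul] at this
    linarith
  have hup : ∑ f ∈ F, ∑ g ∈ F, c f g < k * B * (N * (N * θ / (4 * B))) := by
    have h1 : ∑ f ∈ F, ∑ g ∈ F, c f g = ∑ q : ι × Fin B,
        ((F.filter fun f => e f q.1 ≤ τ q.2).card : ℝ) *
        ((F.filter fun f => τ q.2 + s ≤ e f q.1).card : ℝ) := by
      simp only [c]
      simp only [Finset.sum_comm (s := F) (t := (Finset.univ : Finset (ι × Fin B)))]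
      refine Finset.sum_congr rfl fun q _ => ?_
      rw [Finset.card_filter, Finset.card_filter]
      push_cast
      rw [Finset.sum_mul_sum]
    rw [h1]
    have h2 : ∑ q : ι × Fin B, (N * (N * θ / (4 * B))) = k * B * (N * (N * θ / (4 * B))) := by
      rw [Finset.sum_const, nsmul_eq_mul, Finset.card_univ, Fintype.card_prod, Fintype.card_fin]
      push_cast
      ring
    rw [← h2]
    have : Nonempty (Fin B) := ⟨⟨0, hB⟩⟩
    refine Finset.sum_lt_sum_of_nonempty Finset.univ_nonempty fun q _ => ?_
    have l1 : ((F.filter fun f => e f q.1 ≤ τ q.2).card : ℝ) ≤ N := by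
      rw [hNdef]; exact_mod_cast Finset.card_filter_le _ _
    have l2 : ((F.filter fun f => τ q.2 + s ≤ e f q.1).card : ℝ) ≤ N := by
      rw [hNdef]; exact_mod_cast Finset.card_filter_le _ _
    have hm : 0 < N * θ / (4 * B) := by positivity
    have l0 : (0:ℝ) ≤ ((F.filter fun f => τ q.2 + s ≤ e f q.1).card : ℝ) := by positivity
    rcases le_or_gt (N * θ / (4 * B)) ((F.filter fun f => e f q.1 ≤ τ q.2).card : ℝ) with h | h
    · have := hcon q.1 q.2 h
      nlinarith
    · nlinarith
  have h3 : k * B * (N * (N * θ / (4 * B))) = k * θ * N * N / 4 := by field_simp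
  rw [h3] at hup
  have : 0 < θ * k * N := by positivity
  nlinarith

open Classical in
/-- Each splitting costs a factor `4 * B / θ` in cardinality and doubles the number of shattered
patterns. -/
theorem two_pow_le_card_shatSet {α ι : Type*} [Fintype ι] [Nonempty ι] {B : ℕ} (hB : 0 < B)
    {e : α → ι → ℝ} {τ : Fin B → ℝ} {s θ : ℝ} (hs : 0 < s) (hθ : 0 < θ) (hθ1 : θ ≤ 1) (r : ℕ) :
    ∀ F : Finset α, (∀ f ∈ F, ∀ g ∈ F, f ≠ g → θ * Fintype.card ι ≤
      ((Finset.univ.filter fun j => ∃ v, (e f j ≤ τ v ∧ τ v + s ≤ e g j) ∨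
        (e g j ≤ τ v ∧ τ v + s ≤ e f j)).card : ℝ)) →
      (4 * B / θ) ^ r ≤ (F.card : ℝ) → 2 ^ r ≤ (shatSet e τ s F).card := by
  have hBpos : (1 : ℝ) ≤ B := by exact_mod_cast hB
  have ha : (2 : ℝ) ≤ 4 * B / θ := by
    rw [le_div_iff₀ hθ]; linarith
  induction r with
  | zero =>
    intro F _ hF
    have hF' : 0 < F.card := by
      have : (1 : ℝ) ≤ F.card := by simpa using hF
      exact_mod_cast this
    obtain ⟨f, hf⟩ := Finset.card_pos.mp hF'
    rw [pow_zero, Nat.one_le_iff_ne_zero, ← Nat.pos_iff_ne_zero, Finset.card_pos]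
    exact ⟨fun _ => none, by
      simp only [shatSet, Finset.mem_filter, Finset.mem_univ, true_and]
      exact fun E => ⟨f, hf, by simp⟩⟩
  | succ r ih =>
    intro F hsep hF
    have h1 : (1 : ℝ) ≤ (4 * B / θ) ^ r := one_le_pow₀ (by linarith)
    have h2 : (2 : ℝ) ≤ F.card := by
      rw [pow_succ] at hF
      nlinarith
    obtain ⟨x, v, hlo, hhi⟩ := exists_big_sides hB (by exact_mod_cast h2) hθ hsep
    have h3 : (4 * B / θ) ^ r ≤ F.card * θ / (4 * B) := by
      rw [le_div_iff₀ (by positivity)]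
      rw [pow_succ] at hF
      calc (4 * B / θ) ^ r * (4 * B) = (4 * B / θ) ^ r * (4 * B / θ) * θ := by
            field_simp
        _ ≤ F.card * θ := by gcongr
    have i1 := ih (F.filter fun f => e f x ≤ τ v) (fun f hf g hg =>
      hsep f (Finset.mem_of_mem_filter f hf) g (Finset.mem_of_mem_filter g hg)) (h3.trans hlo)
    have i2 := ih (F.filter fun f => τ v + s ≤ e f x) (fun f hf g hg =>
      hsep f (Finset.mem_of_mem_filter f hf) g (Finset.mem_of_mem_filter g hg)) (h3.trans hhi)
    have i3 := card_shatSet_add_le (e := e) (τ := τ) hs (Finset.filter_subset (fun f => e f x ≤ τ v) F)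
      (Finset.filter_subset (fun f => τ v + s ≤ e f x) F) x v (by simp) (by simp)
    rw [pow_succ]
    omega

/-! ### Extraction of few coordinates -/

/-- A random sample of `k` coordinates, drawn with replacement, hits at least `θ * k / 4`
times each of fewer than `exp (θ * k / 4)` sets of density at least `θ`. -/
theorem exists_sample {β : Type*} {n k : ℕ} (hn : 0 < n) (P : Finset β) (A : β → Finset (Fin n)) {θ : ℝ}
    (hA : ∀ b ∈ P, θ * n ≤ (A b).card) (hP : (P.card : ℝ) < Real.exp (θ * k / 4)) :
    ∃ φ : Fin k → Fin n, ∀ b ∈ P,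
      θ * k / 4 ≤ ((Finset.univ.filter fun j => φ j ∈ A b).card : ℝ) := by
  by_contra! hcon
  have hnpos : (0 : ℝ) < n := by exact_mod_cast hn
  -- for a uniform random `φ`, the average of `∏ j, w b (φ j)` is the Laplace transform at `-1`
  -- of the number of hits in `A b`
  let w : β → Fin n → ℝ := fun b i => if i ∈ A b then Real.exp (-1) else 1
  have hw : ∀ b (φ : Fin k → Fin n), ∏ j : Fin k, w b (φ j) =
      Real.exp (-((Finset.univ.filter fun j => φ j ∈ A b).card : ℝ)) := by
    intro b φ
    simp only [w]
    rw [Finset.prod_ite, Finset.prod_const, Finset.prod_const_one, mul_one, ← Real.exp_nat_mul]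
    simp
  have hsum : ∀ b ∈ P, ∑ i, w b i ≤ n * Real.exp (-(θ / 2)) := by
    intro b hb
    have h1 : ∑ i, w b i = n - (1 - Real.exp (-1)) * (A b).card := by
      have : ∀ i, w b i = 1 - (1 - Real.exp (-1)) * (if i ∈ A b then 1 else 0) := by
        intro i; simp only [w]; split_ifs <;> ring
      simp only [this, Finset.sum_sub_distrib, ← Finset.mul_sum]
      simp
    have h2 : Real.exp (-1) ≤ 1 / 2 := by
      rw [Real.exp_neg, one_div]
      exact inv_anti₀ (by norm_num) (by linarith [Real.add_one_le_exp (1 : ℝ)])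
    have h3 := hA b hb
    have h4 := Real.add_one_le_exp (-(θ / 2))
    rw [h1]
    have h5 : (0:ℝ) ≤ (A b).card := by positivity
    nlinarith
  have hkey : (n : ℝ) ^ k ≤ P.card * Real.exp (-(θ * k / 4)) * n ^ k := by
    calc (n : ℝ) ^ k = ∑ φ : Fin k → Fin n, (1 : ℝ) := by simp
      _ ≤ ∑ φ : Fin k → Fin n, ∑ b ∈ P, Real.exp (θ * k / 4) * ∏ j, w b (φ j) := by
          refine Finset.sum_le_sum fun φ _ => ?_
          obtain ⟨b, hb, hlt⟩ := hcon φ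
          refine le_trans ?_ (Finset.single_le_sum
            (f := fun b => Real.exp (θ * k / 4) * ∏ j, w b (φ j)) (fun b _ => ?_) hb)
          · rw [hw, ← Real.exp_add]
            exact Real.one_le_exp (by linarith)
          · simp only [hw]; positivity
      _ = ∑ b ∈ P, Real.exp (θ * k / 4) * (∑ i, w b i) ^ k := by
          rw [Finset.sum_comm]
          refine Finset.sum_congr rfl fun b _ => ?_
          rw [← Finset.mul_sum, Fintype.sum_pow]
      _ ≤ ∑ b ∈ P, Real.exp (θ * k / 4) * (n * Real.exp (-(θ / 2))) ^ k := by
          refine Finset.sum_le_sum fun b hb => ?_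
          have : 0 ≤ ∑ i, w b i := Finset.sum_nonneg fun i _ => by
            simp only [w]; positivity
          gcongr
          exact hsum b hb
      _ = P.card * Real.exp (-(θ * k / 4)) * n ^ k := by
          rw [Finset.sum_const, nsmul_eq_mul, mul_pow, ← Real.exp_nat_mul]
          have : Real.exp (θ * k / 4) * Real.exp (k * -(θ / 2)) = Real.exp (-(θ * k / 4)) := by
            rw [← Real.exp_add]; congr 1; ring
          rw [← this]; ring
  have h1 : P.card * Real.exp (-(θ * k / 4)) < 1 := by
    rw [Real.exp_neg, ← div_eq_mul_inv, div_lt_one (Real.exp_pos _)]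
    exact hP
  have h2 : (0 : ℝ) < (n : ℝ) ^ k := by positivity
  nlinarith

/-- The standard bound on the number of patterns carrying at most `d` thresholds, in the form
given by the generating function `∑ u, l ^ #(support of u) = (1 + l * B) ^ #ι`. -/
theorem card_le_of_support_le {ι : Type*} [Fintype ι] {B : ℕ} (S : Finset (ι → Option (Fin B))) {d : ℕ}
    (hS : ∀ u ∈ S, (Finset.univ.filter fun j => u j ≠ none).card ≤ d) {l : ℝ} (hl : 0 < l) (hl1 : l ≤ 1) :
    S.card * l ^ d ≤ Real.exp (l * B * Fintype.card ι) := by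
  classical
  let w : Option (Fin B) → ℝ := fun o => if o ≠ none then l else 1
  calc S.card * l ^ d = ∑ u ∈ S, l ^ d := by rw [Finset.sum_const, nsmul_eq_mul]
    _ ≤ ∑ u ∈ S, ∏ j, w (u j) := by
        refine Finset.sum_le_sum fun u hu => ?_
        simp only [w]
        rw [Finset.prod_ite, Finset.prod_const, Finset.prod_const_one, mul_one]
        exact pow_le_pow_of_le_one hl.le hl1 (hS u hu)
    _ ≤ ∑ u : ι → Option (Fin B), ∏ j, w (u j) := by
        refine Finset.sum_le_sum_of_subset_of_nonneg (Finset.subset_univ _) fun u _ _ => ?_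
        exact Finset.prod_nonneg fun j _ => by simp only [w]; split_ifs <;> linarith
    _ = ∏ _j : ι, ∑ o, w o := by
        rw [Finset.prod_univ_sum, Fintype.piFinset_univ]
    _ = (l * B + 1) ^ Fintype.card ι := by
        rw [Finset.prod_const, Fintype.sum_option, Finset.card_univ]
        congr 1
        simp [w]; ring
    _ ≤ Real.exp (l * B) ^ Fintype.card ι := by
        gcongr
        exact Real.add_one_le_exp _
    _ = Real.exp (l * B * Fintype.card ι) := by
        rw [← Real.exp_nat_mul]; congr 1; ring

/-! ### Shattering and the VC dimension of a convex body -/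

/-- A compact convex set that meets every closed orthant attached to a corner of a cube (after
projecting to `σ`) contains the whole cube: a hyperplane separating a point `z` of the cube from
the projection is violated by a point in the orthant chosen by the signs of its normal. -/
theorem cube_subset_of_corners {n : ℕ} {K : Set (Fin n → ℝ)} (hK : IsCompact K)
    (hc : Convex ℝ K) (σ : Finset (Fin n)) (x : Fin n → ℝ) {s : ℝ}
    (h : ∀ E : Finset (Fin n), ∃ k ∈ K, ∀ i ∈ σ, (i ∈ E → x i + s ≤ k i) ∧ (i ∉ E → k i ≤ x i))
    (z : Fin n → ℝ) (hz : ∀ i ∈ σ, z i ∈ Set.Icc (x i) (x i + s)) :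
    ∃ k ∈ K, ∀ i ∈ σ, k i = z i := by
  classical
  let P : (Fin n → ℝ) →ₗ[ℝ] (Fin n → ℝ) :=
    LinearMap.pi fun i => if i ∈ σ then LinearMap.proj i else 0
  have hP : ∀ y i, P y i = if i ∈ σ then y i else 0 := by
    intro y i
    simp only [P, LinearMap.pi_apply]
    split_ifs <;> simp
  by_cases hmem : P z ∈ P '' K
  · obtain ⟨k, hk, hkz⟩ := hmem
    refine ⟨k, hk, fun i hi => ?_⟩
    have := congrFun hkz i
    simpa [hP, hi] using this
  · exfalso
    have hcl : IsClosed (P '' K) :=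
      (hK.image P.continuous_of_finiteDimensional).isClosed
    obtain ⟨f, b, hf, hb⟩ := geometric_hahn_banach_closed_point (hc.linear_image P) hcl hmem
    have hfs : ∀ y, f y = ∑ i, y i * f (Pi.single i 1) := by
      intro y
      have := LinearMap.pi_apply_eq_sum_univ (f : (Fin n → ℝ) →ₗ[ℝ] ℝ) y
      simp only [ContinuousLinearMap.coe_coe, smul_eq_mul] at this
      rw [this]
      refine Finset.sum_congr rfl fun i _ => ?_
      congr 2
      funext j
      simp [Pi.single_apply, eq_comm]
    obtain ⟨k, hk, hk'⟩ := h (Finset.univ.filter fun i => 0 ≤ f (Pi.single i 1))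
    have h1 : f (P z) ≤ f (P k) := by
      rw [hfs, hfs (P k)]
      refine Finset.sum_le_sum fun i _ => ?_
      rw [hP, hP]
      split_ifs with hi
      · obtain ⟨ha, hb⟩ := hk' i hi
        obtain ⟨hz1, hz2⟩ := hz i hi
        simp only [Finset.mem_filter, Finset.mem_univ, true_and] at ha hb
        by_cases h0 : 0 ≤ f (Pi.single i 1)
        · exact mul_le_mul_of_nonneg_right (hz2.trans (ha h0)) h0
        · exact mul_le_mul_of_nonpos_right ((hb h0).trans hz1) (not_le.mp h0).le
      · exact le_rfl
    have := hf _ ⟨k, hk, rfl⟩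
    linarith

/-- Coordinates may be repeated by `φ`, but a repeated coordinate cannot carry two thresholds of a
shattered pattern, since each of the two would have to exceed the other by `s`. -/
theorem support_le_vcDim {n : ℕ} {K : Set (Fin n → ℝ)} (hK : IsCompact K)
    (hc : Convex ℝ K) {F : Finset (Fin n → ℝ)} (hF : ∀ f ∈ F, f ∈ K) {ι : Type*} [Fintype ι]
    (φ : ι → Fin n) {B : ℕ} {τ : Fin B → ℝ} {s : ℝ} (hs : 0 < s) {u : ι → Option (Fin B)}
    (hu : Shat (fun f j => f (φ j)) τ s F u) :
    (Finset.univ.filter fun j => u j ≠ none).card ≤ vcDim K s := by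
  classical
  have hinj : Set.InjOn φ (Finset.univ.filter fun j => u j ≠ none : Finset ι) := by
    intro j hj j' hj' hjj
    simp only [Finset.coe_filter, Finset.mem_univ, true_and, Set.mem_ofPred_eq] at hj hj'
    obtain ⟨v, hv⟩ := Option.ne_none_iff_exists'.mp hj
    obtain ⟨v', hv'⟩ := Option.ne_none_iff_exists'.mp hj'
    by_contra hne
    obtain ⟨f, -, hf⟩ := hu {j}
    obtain ⟨g, -, hg⟩ := hu {j'}
    have a1 := (hf j v hv).1 (by simp)
    have a2 := (hf j' v' hv').2 (by simpa using Ne.symm hne)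
    have a3 := (hg j' v' hv').1 (by simp)
    have a4 := (hg j v hv).2 (by simpa using hne)
    simp only [hjj] at a1 a2 a3 a4
    linarith
  rw [← Finset.card_image_of_injOn hinj]
  refine le_csSup ⟨n, ?_⟩ ⟨_, rfl, ?_⟩
  · rintro m ⟨σ, rfl, -⟩
    simpa using Finset.card_le_univ σ
  have hx : ∀ i : Fin n, ∃ a : ℝ, ∀ j v, φ j = i → u j = some v → a = τ v := by
    intro i
    by_cases h : ∃ j v, φ j = i ∧ u j = some v
    · obtain ⟨j, v, hj, hv⟩ := h
      refine ⟨τ v, fun j' v' hj' hv' => ?_⟩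
      obtain rfl : j = j' := hinj (by simp [hv]) (by simp [hv']) (hj.trans hj'.symm)
      rw [hv] at hv'
      rw [Option.some.inj hv']
    · exact ⟨0, fun j v hj hv => absurd ⟨j, v, hj, hv⟩ h⟩
  choose x hx using hx
  refine ⟨x, cube_subset_of_corners hK hc _ x fun E => ?_⟩
  obtain ⟨f, hf, hf'⟩ := hu (Finset.univ.filter fun j => φ j ∈ E)
  refine ⟨f, hF f hf, fun i hi => ?_⟩
  obtain ⟨j, hj, rfl⟩ := Finset.mem_image.mp hi
  simp only [Finset.mem_filter, Finset.mem_univ, true_and] at hj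
  obtain ⟨v, hv⟩ := Option.ne_none_iff_exists'.mp hj
  rw [hx (φ j) j v rfl hv]
  simpa using hf' j v hv

/-- The thresholds `-1 + v * s` split any two numbers of `[-1, 1]` at distance `2 * s`. -/
theorem exists_threshold {s : ℝ} (hs : 0 < s) {B : ℕ} (hB : ⌈2 / s⌉₊ < B) {a b : ℝ}
    (ha : -1 ≤ a) (ha' : a ≤ 1) (hab : a + 2 * s ≤ b) :
    ∃ v : Fin B, a ≤ -1 + (v : ℕ) * s ∧ -1 + (v : ℕ) * s + s ≤ b := by
  refine ⟨⟨⌈(a + 1) / s⌉₊, ?_⟩, ?_, ?_⟩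
  · refine lt_of_le_of_lt (Nat.ceil_le_ceil ?_) hB
    gcongr; linarith
  · have := Nat.le_ceil ((a + 1) / s)
    rw [div_le_iff₀ hs] at this
    simp only; linarith
  · have := Nat.ceil_lt_add_one (a := (a + 1) / s) (by apply div_nonneg <;> linarith)
    have h2 : (⌈(a + 1) / s⌉₊ : ℝ) * s < ((a + 1) / s + 1) * s := by gcongr
    have h3 : ((a + 1) / s + 1) * s = a + 1 + s := by field_simp
    simp only; linarith

/-! ### The bound for separated sets -/

/-- Points at `ℓ_p` distance more than `t * n ^ (1 / p)` differ by `t / 2` in a positive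
proportion of the coordinates, as no coordinate contributes more than `2 ^ p`. -/
theorem card_far_coords {n : ℕ} {p t : ℝ} (hp : 1 < p) (ht : 0 < t) {f g : Fin n → ℝ}
    (hf : ∀ i, |f i| ≤ 1) (hg : ∀ i, |g i| ≤ 1) (h : n * t ^ p < ∑ i, |f i - g i| ^ p) :
    (t / 2) ^ p / 2 * n ≤ ((Finset.univ.filter fun i => t / 2 ≤ |f i - g i|).card : ℝ) := by
  have h2p : (2 : ℝ) ≤ 2 ^ p := by
    simpa using Real.rpow_le_rpow_of_exponent_le (x := 2) (by norm_num) hp.le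
  have h1 : ∀ i, |f i - g i| ^ p ≤ (t / 2) ^ p + 2 ^ p * (if t / 2 ≤ |f i - g i| then 1 else 0) := by
    intro i
    split_ifs with hi
    · have : |f i - g i| ≤ 2 := (abs_sub _ _).trans (by linarith [hf i, hg i])
      have := Real.rpow_le_rpow (abs_nonneg _) this (by linarith : 0 ≤ p)
      have : 0 ≤ (t / 2) ^ p := by positivity
      linarith
    · have := Real.rpow_le_rpow (abs_nonneg _) (not_le.mp hi).le (by linarith : 0 ≤ p)
      linarith
  have h2 := Finset.sum_le_sum fun i (_ : i ∈ Finset.univ) => h1 i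
  rw [Finset.sum_add_distrib, ← Finset.mul_sum, Finset.sum_const, Finset.card_univ,
    Fintype.card_fin, nsmul_eq_mul, Finset.sum_boole] at h2
  have h3 : t ^ p = (t / 2) ^ p * 2 ^ p := by
    rw [← Real.mul_rpow (by positivity) (by norm_num)]; congr 1; ring
  set q : ℝ := 2 ^ p with hq
  set w : ℝ := (t / 2) ^ p with hw
  set c : ℝ := ((Finset.univ.filter fun i => t / 2 ≤ |f i - g i|).card : ℝ) with hcdef
  have hw0 : 0 ≤ w := by positivity
  have hn0 : (0:ℝ) ≤ n := by positivity
  have h4 : n * w * q < n * w + q * c := by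
    calc n * w * q = n * t ^ p := by rw [h3]; ring
      _ < _ := h
      _ ≤ _ := h2
  have h5 : 0 ≤ n * w * (q - 2) := by
    apply mul_nonneg (by positivity); linarith
  have h6 : q * (w / 2 * n) ≤ q * c := by nlinarith
  exact le_of_mul_le_mul_left h6 (by linarith)

/-- The numerical conclusion, to be read with `θ⁻¹` and `B` bounded by powers of `exp Q`. With
`L = log N / d`, the hypotheses give `L ≲ Q * (Q + log L)`, because the sample size `k` is
proportional to `log N = L * d` and the factor `d` cancels in `B * k / d`. Hence `L ≲ Q ^ 2`. -/
theorem log_le_of_counts {N θ Q : ℝ} {d B k r : ℕ} (hd1 : 1 ≤ d) (hN2 : 0 < N) (hL : d < Real.log N)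
    (hB0 : 0 < B) (hk_hi : (k : ℝ) ≤ 9 * Real.log N / θ) (hkpos : (0 : ℝ) < k) (hθ : 0 < θ)
    (hθ1 : θ ≤ 1) (hQ0 : Real.log 2 ≤ Q) (hBlog : Real.log B ≤ 4 * Q) (hθlog : -Real.log θ ≤ 2 * Q)
    (hr2 : N ≤ (4 * B / (θ / 4)) ^ (r + 1))
    (hy : (2 : ℝ) ^ r * ((d : ℝ) / (B * k)) ^ d ≤ Real.exp d) :
    Real.log N ≤ 2500 * Q ^ 2 * d := by
  have hdr : (1 : ℝ) ≤ d := by exact_mod_cast hd1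
  have hB1 : (1 : ℝ) ≤ B := by exact_mod_cast hB0
  have hlogN : 1 ≤ Real.log N := by linarith
  have hQpos : 0 < Q := lt_of_lt_of_le (Real.log_pos (by norm_num)) hQ0
  have hln2 := Real.log_two_gt_d9
  have hln2' := Real.log_two_lt_d9
  set a : ℝ := 4 * B / (θ / 4) with hadef
  have ha1 : 1 < a := by
    rw [hadef, lt_div_iff₀ (by positivity)]; linarith
  have h16 : Real.log 16 = 4 * Real.log 2 := by
    rw [show (16 : ℝ) = 2 ^ 4 by norm_num, Real.log_pow]; norm_num
  have halog : Real.log a ≤ 10 * Q := by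
    have : a = 16 * B / θ := by rw [hadef]; field_simp; norm_num
    rw [this, Real.log_div (by positivity) (by positivity), Real.log_mul (by norm_num) (by positivity)]
    linarith
  have halog0 : 0 < Real.log a := Real.log_pos ha1
  set z := Real.sqrt (Real.log N / d) with hz
  have hz2 : z ^ 2 = Real.log N / d := Real.sq_sqrt (by positivity)
  have hz1 : 1 ≤ z := by
    rw [hz, Real.one_le_sqrt, le_div_iff₀ (by positivity)]; linarith
  have hratio : Real.log (B * k / d) ≤ 10 * Q + 2 * z := by
    have h1 : (B : ℝ) * k / d ≤ 16 * B / θ * z ^ 2 := by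
      rw [hz2]
      calc (B : ℝ) * k / d ≤ B * (9 * Real.log N / θ) / d := by gcongr
        _ = 9 * (B * Real.log N / (θ * d)) := by field_simp
        _ ≤ 16 * (B * Real.log N / (θ * d)) := by gcongr; norm_num
        _ = _ := by field_simp
    have h2 := Real.log_le_log (by positivity) h1
    have h4 : Real.log (16 * B / θ * z ^ 2) =
        Real.log 16 + Real.log B - Real.log θ + 2 * Real.log z := by
      rw [Real.log_mul (by positivity) (by positivity), Real.log_pow,
        Real.log_div (by positivity) (by positivity), Real.log_mul (by norm_num) (by positivity)]
      push_cast
      ring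
    have h3 := Real.log_le_sub_one_of_pos (by linarith : 0 < z)
    linarith
  have hrlog : r * Real.log 2 ≤ d * (12 * Q + 2 * z) := by
    have h2 := Real.log_le_log (by positivity) hy
    rw [Real.log_mul (by positivity) (by positivity), Real.log_pow, Real.log_pow, Real.log_exp,
      ← inv_div, Real.log_inv] at h2
    have h3 : (d : ℝ) * Real.log (B * k / d) ≤ d * (10 * Q + 2 * z) := by gcongr
    nlinarith
  have hlogN_le : Real.log N ≤ (r + 1) * Real.log a := by
    have := Real.log_le_log (by linarith) hr2
    rw [Real.log_pow] at this
    exact_mod_cast this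
  have hz0 : 0 < z := by linarith
  have hr' : (r : ℝ) + 1 ≤ d * (26 * Q + 4 * z) := by
    have h0 : (0 : ℝ) ≤ r := by positivity
    nlinarith
  have hfin : z ^ 2 ≤ (26 * Q + 4 * z) * (10 * Q) := by
    rw [hz2, div_le_iff₀ (by positivity)]
    calc Real.log N ≤ (r + 1) * Real.log a := hlogN_le
      _ ≤ d * (26 * Q + 4 * z) * (10 * Q) := by gcongr
      _ = _ := by ring
  have hz50 : z ≤ 50 * Q := by
    by_contra! h
    nlinarith
  have : Real.log N = z ^ 2 * d := by rw [hz2]; field_simp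
  rw [this]
  have : z ^ 2 ≤ 2500 * Q ^ 2 := by nlinarith
  gcongr

set_option maxHeartbeats 1000000 in
open Classical in
/-- The entropy bound for `ℓ_p`-separated subsets of `K`. -/
theorem log_card_le {n : ℕ} {K : Set (Fin n → ℝ)} (hK : IsCompact K)
    (hc : Convex ℝ K) (hcube : K ⊆ cubeBall n) {p t : ℝ} (hp : 1 < p) (ht : 0 < t) (ht1 : t < 1)
    {F : Finset (Fin n → ℝ)} (hF : ∀ f ∈ F, f ∈ K)
    (hsep : ∀ f ∈ F, ∀ g ∈ F, f ≠ g → n * t ^ p < ∑ i, |f i - g i| ^ p) :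
    Real.log F.card ≤ 2500 * p ^ 2 * Real.log (2 / t) ^ 2 * vcDim K (1 / 4 * t) := by
  rcases Nat.lt_or_ge F.card 2 with hN | hN
  · have : Real.log F.card = 0 := by
      interval_cases h : F.card <;> simp
    rw [this]; positivity
  set s : ℝ := 1 / 4 * t with hsdef
  have hs : 0 < s := by positivity
  set d := vcDim K s with hd
  set B : ℕ := ⌈2 / s⌉₊ + 1 with hBdef
  have hB0 : 0 < B := Nat.succ_pos _
  let τ : Fin B → ℝ := fun v => -1 + (v : ℕ) * s
  set θ : ℝ := (t / 2) ^ p / 2 with hθdef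
  have hθ : 0 < θ := by positivity
  have hθ1 : θ ≤ 1 := by
    have : (t / 2) ^ p ≤ 1 := Real.rpow_le_one (by positivity) (by linarith) (by linarith)
    linarith
  have hbd : ∀ f ∈ F, ∀ i, |f i| ≤ 1 := fun f hf => hcube (hF f hf)
  -- a far coordinate is split by some threshold
  have hthr : ∀ f ∈ F, ∀ g ∈ F, ∀ i, t / 2 ≤ |f i - g i| →
      ∃ v, (f i ≤ τ v ∧ τ v + s ≤ g i) ∨ (g i ≤ τ v ∧ τ v + s ≤ f i) := by
    intro f hf g hg i hi
    have hfi := abs_le.mp (hbd f hf i)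
    have hgi := abs_le.mp (hbd g hg i)
    rcases le_abs.mp hi with h | h
    · obtain ⟨v, hv⟩ := exists_threshold (b := f i) hs (Nat.lt_succ_self _) hgi.1 hgi.2 (by linarith)
      exact ⟨v, Or.inr hv⟩
    · obtain ⟨v, hv⟩ := exists_threshold (b := g i) hs (Nat.lt_succ_self _) hfi.1 hfi.2 (by linarith)
      exact ⟨v, Or.inl hv⟩
  have hfar : ∀ f ∈ F, ∀ g ∈ F, f ≠ g →
      θ * n ≤ ((Finset.univ.filter fun i => t / 2 ≤ |f i - g i|).card : ℝ) :=
    fun f hf g hg hfg => card_far_coords hp ht (hbd f hf) (hbd g hg) (hsep f hf g hg hfg)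
  obtain ⟨f₀, hf₀, g₀, hg₀, hfg₀⟩ := Finset.one_lt_card.mp hN
  have hn : 0 < n := by
    rcases Nat.eq_zero_or_pos n with rfl | h
    · exact absurd (Subsingleton.elim f₀ g₀) hfg₀
    · exact h
  have hnr : (0 : ℝ) < n := by exact_mod_cast hn
  -- a single separated coordinate already shows that the dimension is positive
  have hd1 : 1 ≤ d := by
    have h1 := hfar f₀ hf₀ g₀ hg₀ hfg₀
    have h2 : (0 : ℝ) < ((Finset.univ.filter fun i => t / 2 ≤ |f₀ i - g₀ i|).card : ℝ) :=
      lt_of_lt_of_le (by positivity) h1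
    obtain ⟨i, hi⟩ := Finset.card_pos.mp (by exact_mod_cast h2)
    obtain ⟨v, hv⟩ := hthr f₀ hf₀ g₀ hg₀ i (Finset.mem_filter.mp hi).2
    have h3 : Shat (fun f (_ : Fin 1) => f i) τ s F (fun _ => some v) := by
      have key : ∀ lo ∈ F, ∀ hi ∈ F, lo i ≤ τ v → τ v + s ≤ hi i →
          Shat (fun f (_ : Fin 1) => f i) τ s F (fun _ => some v) := by
        intro lo hlo up hup h1 h2 E
        by_cases h0 : (0 : Fin 1) ∈ E
        · refine ⟨up, hup, fun j v' hv' => ?_⟩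
          obtain rfl := Option.some.inj hv'
          obtain rfl := Subsingleton.elim j 0
          exact ⟨fun _ => h2, fun h => absurd h0 h⟩
        · refine ⟨lo, hlo, fun j v' hv' => ?_⟩
          obtain rfl := Option.some.inj hv'
          obtain rfl := Subsingleton.elim j 0
          exact ⟨fun h => absurd h h0, fun _ => h1⟩
      rcases hv with ⟨h1, h2⟩ | ⟨h1, h2⟩
      · exact key f₀ hf₀ g₀ hg₀ h1 h2
      · exact key g₀ hg₀ f₀ hf₀ h1 h2
    have := support_le_vcDim hK hc hF (fun _ : Fin 1 => i) hs h3
    simpa using this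
  have hdr : (1 : ℝ) ≤ d := by exact_mod_cast hd1
  set N : ℝ := (F.card : ℝ) with hNdef
  have hN2 : (2 : ℝ) ≤ N := by rw [hNdef]; exact_mod_cast hN
  set ℓ := Real.log (2 / t) with hℓ
  have hln2 := Real.log_two_gt_d9
  have hln2' := Real.log_two_lt_d9
  have hℓ2 : Real.log 2 ≤ ℓ := by
    apply Real.log_le_log (by norm_num)
    rw [le_div_iff₀ ht]; linarith
  set Q := p * ℓ with hQ
  have hQℓ : ℓ ≤ Q := by nlinarith
  have hQ0 : Real.log 2 ≤ Q := by linarith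
  have hgoal : 2500 * p ^ 2 * ℓ ^ 2 * d = 2500 * Q ^ 2 * d := by rw [hQ]; ring
  rw [hgoal]
  rcases le_or_gt (Real.log N) d with hL | hL
  · have h1 : 1 ≤ 2500 * Q ^ 2 := by nlinarith
    nlinarith
  -- the least sample size for which the union bound over all pairs in `F` succeeds
  set k : ℕ := ⌊8 * Real.log N / θ⌋₊ + 1 with hkdef
  have hlogN : 1 ≤ Real.log N := by linarith
  have hk_lo : 8 * Real.log N / θ < k := by
    rw [hkdef]; push_cast; exact Nat.lt_floor_add_one _
  have hk_hi : (k : ℝ) ≤ 9 * Real.log N / θ := by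
    have h1 := Nat.floor_le (a := 8 * Real.log N / θ) (by positivity)
    have h2 : 1 ≤ Real.log N / θ := by rw [le_div_iff₀ hθ]; linarith
    have h3 : 9 * Real.log N / θ = 8 * Real.log N / θ + Real.log N / θ := by ring
    rw [h3, hkdef]; push_cast; linarith
  have hkpos : (0 : ℝ) < k := by rw [hkdef]; positivity
  obtain ⟨φ, hφ⟩ := exists_sample (k := k) hn F.offDiag
    (fun b => Finset.univ.filter fun i => t / 2 ≤ |b.1 i - b.2 i|) (θ := θ)
    (fun b hb => by
      obtain ⟨h1, h2, h3⟩ := Finset.mem_offDiag.mp hb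
      exact hfar _ h1 _ h2 h3) (by
      have h1 : (F.offDiag.card : ℝ) ≤ N * N := by
        rw [Finset.offDiag_card, hNdef, ← Nat.cast_mul]
        exact_mod_cast Nat.sub_le _ _
      have h2 : N * N = Real.exp (2 * Real.log N) := by
        rw [two_mul, Real.exp_add, Real.exp_log (by linarith)]
      refine lt_of_le_of_lt h1 ?_
      rw [h2, Real.exp_lt_exp]
      rw [div_lt_iff₀ hθ] at hk_lo
      linarith)
  have : Nonempty (Fin k) := ⟨⟨0, by rw [hkdef]; exact Nat.succ_pos _⟩⟩
  set a : ℝ := 4 * B / (θ / 4) with hadef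
  have hB1 : (1 : ℝ) ≤ B := by exact_mod_cast hB0
  have ha1 : 1 < a := by
    rw [hadef, lt_div_iff₀ (by positivity)]; linarith
  obtain ⟨r, hr1, hr2⟩ := exists_nat_pow_near (by linarith : (1:ℝ) ≤ N) ha1
  have hS := two_pow_le_card_shatSet hB0 (e := fun (f : Fin n → ℝ) (j : Fin k) => f (φ j)) (τ := τ)
    hs (by positivity : 0 < θ / 4) (by linarith) r F (by
      intro f hf g hg hfg
      have h1 := hφ (f, g) (Finset.mem_offDiag.mpr ⟨hf, hg, hfg⟩)
      rw [Fintype.card_fin]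
      have h2 : θ / 4 * k = θ * k / 4 := by ring
      rw [h2]
      refine h1.trans ?_
      norm_cast
      refine Finset.card_le_card fun j hj => ?_
      simp only [Finset.mem_filter, Finset.mem_univ, true_and] at hj ⊢
      exact hthr f hf g hg _ hj) hr1
  set S := shatSet (fun (f : Fin n → ℝ) (j : Fin k) => f (φ j)) τ s F with hSdef
  have hdk : (d : ℝ) ≤ B * k := by
    have h1 : Real.log N ≤ 8 * Real.log N / θ := by
      rw [le_div_iff₀ hθ]; nlinarith
    nlinarith
  -- the weight `d / (B * k)` minimizes the bound on the number of patterns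
  have hy := card_le_of_support_le S (d := d) (fun u hu => by
    simp only [hSdef, shatSet, Finset.mem_filter, Finset.mem_univ, true_and] at hu
    exact support_le_vcDim hK hc hF φ hs hu) (l := d / (B * k)) (by positivity)
    (by rw [div_le_one (by positivity)]; exact hdk)
  rw [Fintype.card_fin] at hy
  have hBk : (d : ℝ) / (B * k) * B * k = d := by field_simp
  rw [hBk] at hy
  have hBlog : Real.log B ≤ 4 * Q := by
    have h1 : (B : ℝ) ≤ 8 * (2 / t) := by
      have h2 := (Nat.ceil_lt_add_one (a := 2 / s) (by positivity)).le
      have h3 : 2 / s = 8 / t := by rw [hsdef]; field_simp; norm_num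
      have h4 : 1 ≤ 1 / t := by rw [le_div_iff₀ ht]; linarith
      have h5 : 8 / t = 8 * (1 / t) := by ring
      have h6 : 2 / t = 2 * (1 / t) := by ring
      rw [hBdef]; push_cast; linarith
    have h2 := Real.log_le_log (by linarith) h1
    rw [Real.log_mul (by norm_num) (by positivity)] at h2
    have h3 : Real.log 8 = 3 * Real.log 2 := by
      rw [show (8 : ℝ) = 2 ^ 3 by norm_num, Real.log_pow]; norm_num
    linarith
  have hθlog : -Real.log θ ≤ 2 * Q := by
    rw [hθdef, Real.log_div (by positivity) (by norm_num), Real.log_rpow (by positivity)]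
    have : Real.log (t / 2) = -ℓ := by
      rw [hℓ, ← Real.log_inv, inv_div]
    rw [this]
    linarith
  refine log_le_of_counts hd1 (by linarith) hL hB0 hk_hi hkpos hθ hθ1 hQ0 hBlog hθlog hr2.le ?_
  refine le_trans ?_ hy
  gcongr
  exact_mod_cast hS

/-! ### From separated sets to coverings -/

theorem mem_smul_pBall {n : ℕ} {p t : ℝ} (hp : 1 < p) (ht : 0 < t) {x : Fin n → ℝ}
    (hx : ∑ i, |x i| ^ p ≤ n * t ^ p) : x ∈ t • (((n : ℝ) ^ (1 / p)) • pBall n p) := by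
  rcases Nat.eq_zero_or_pos n with rfl | hn
  · refine ⟨_, ⟨0, ?_, rfl⟩, Subsingleton.elim _ _⟩
    simp [pBall]
  have hnr : (0 : ℝ) < n := by exact_mod_cast hn
  have hc : 0 < t * (n : ℝ) ^ (1 / p) := by positivity
  rw [smul_smul, Set.mem_smul_set_iff_inv_smul_mem₀ hc.ne']
  simp only [pBall, Set.mem_ofPred_eq, Pi.smul_apply, smul_eq_mul, abs_mul,
    Real.mul_rpow (abs_nonneg _) (abs_nonneg _), ← Finset.mul_sum]
  rw [abs_of_pos (inv_pos.mpr hc), Real.inv_rpow hc.le, Real.mul_rpow ht.le (by positivity),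
    ← Real.rpow_mul hnr.le, one_div, inv_mul_cancel₀ (by linarith), Real.rpow_one,
    inv_mul_le_iff₀ (by positivity)]
  linarith

theorem entropy_le_vc_pBall :
    ∃ C c : ℝ, 0 < C ∧ 0 < c ∧
      ∀ (n : ℕ) (K : Set (Fin n → ℝ)) (p t : ℝ),
        IsCompact K → Convex ℝ K → (interior K).Nonempty → K ⊆ cubeBall n →
        1 < p → 0 < t → t < 1 →
        Real.log (covN K (((n : ℝ) ^ (1 / p)) • pBall n p) t) ≤
          C * p ^ 2 * (Real.log (2 / t)) ^ 2 * vcDim K (c * t) := by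
  classical
  refine ⟨2500, 1 / 4, by norm_num, by norm_num, ?_⟩
  intro n K p t hK hc _ hcube hp ht ht1
  set R := 2500 * p ^ 2 * (Real.log (2 / t)) ^ 2 * vcDim K (1 / 4 * t) with hR
  let good : Finset (Fin n → ℝ) → Prop := fun F => (∀ f ∈ F, f ∈ K) ∧
    ∀ f ∈ F, ∀ g ∈ F, f ≠ g → n * t ^ p < ∑ i, |f i - g i| ^ p
  have hgood : ∀ F, good F → Real.log F.card ≤ R := fun F hF =>
    log_card_le hK hc hcube hp ht ht1 hF.1 hF.2
  let T : Set ℕ := {m | ∃ F, good F ∧ F.card = m}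
  have hT : T.Nonempty := ⟨0, ∅, ⟨by simp, by simp⟩, rfl⟩
  have hTb : BddAbove T := by
    refine ⟨⌈Real.exp R⌉₊, ?_⟩
    rintro m ⟨F, hF, rfl⟩
    have h1 : (F.card : ℝ) ≤ Real.exp R := by
      rcases Nat.eq_zero_or_pos F.card with h | h
      · rw [h, Nat.cast_zero]; positivity
      · rw [← Real.log_le_iff_le_exp (by exact_mod_cast h)]
        exact hgood F hF
    exact_mod_cast h1.trans (Nat.le_ceil _)
  -- a separated set of maximal cardinality is a net
  obtain ⟨F, hF, hFcard⟩ := Nat.sSup_mem hT hTb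
  have hmax : ∀ G, good G → G.card ≤ F.card := by
    intro G hG
    rw [hFcard]
    exact le_csSup hTb ⟨G, hG, rfl⟩
  have hcov : covN K (((n : ℝ) ^ (1 / p)) • pBall n p) t ≤ F.card := by
    refine Nat.sInf_le ⟨F, rfl, fun x hx => ?_⟩
    have key : ∃ f ∈ F, ∑ i, |x i - f i| ^ p ≤ n * t ^ p := by
      by_contra! hcon
      have hxF : x ∉ F := by
        intro hxF
        have h1 := hcon x hxF
        have h2 : ∑ i, |x i - x i| ^ p = 0 := by
          simp [Real.zero_rpow (by linarith : p ≠ 0)]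
        rw [h2] at h1
        have : 0 ≤ n * t ^ p := by positivity
        linarith
      have h3 := hmax (insert x F) ⟨?_, ?_⟩
      · rw [Finset.card_insert_of_notMem hxF] at h3
        omega
      · intro f hf
        rcases Finset.mem_insert.mp hf with rfl | hf
        · exact hx
        · exact hF.1 f hf
      · intro f hf g hg hfg
        rcases Finset.mem_insert.mp hf with rfl | hf <;>
          rcases Finset.mem_insert.mp hg with rfl | hg
        · exact absurd rfl hfg
        · exact hcon g hg
        · simp only [abs_sub_comm (f _)]
          exact hcon f (by assumption)
        · exact hF.2 f hf g hg hfg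
    obtain ⟨f, hf, hfx⟩ := key
    refine Set.mem_biUnion hf ⟨x - f, mem_smul_pBall hp ht ?_, by simp⟩
    simpa using hfx
  refine le_trans ?_ (hgood F hF)
  rcases Nat.eq_zero_or_pos (covN K (((n : ℝ) ^ (1 / p)) • pBall n p) t) with h | h
  -- for empty `K` the covering number is `0`, where `Real.log` is `0` by convention
  · rw [h]
    simp only [Nat.cast_zero, Real.log_zero]
    exact Real.log_natCast_nonneg _
  · exact Real.log_le_log (by exact_mod_cast h) (by exact_mod_cast hcov)
end

section
/- There is an absolute constant c > 0 such that for every convex body K ⊂ B_∞^n and every 0 < t < 1, log N(K, B_∞^n, t) ≥ VC(K, c t). -/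
/-!
The constant `c = 6` works. If the projection of `K` to the coordinates `σ` contains
`x + [0, 6t]^σ`, lift the `3 ^ |σ|` grid points `x + {0, 3t, 6t}^σ` to points of `K`. Two distinct
ones differ by at least `3t > 2t` in some coordinate, so no translate of `t • B_∞ⁿ` contains both.
Hence any cover has at least `3 ^ |σ| ≥ e ^ |σ|` members. Compactness of `K` supplies a finite
cover, so that the covering number is attained.
-/

open Pointwise

lemma exists_abs_sub_le_of_mem_cover {n : ℕ} {K : Set (Fin n → ℝ)} {t : ℝ} (ht : 0 < t)
    {s : Finset (Fin n → ℝ)} (hs : K ⊆ ⋃ c ∈ s, (fun y => c + y) '' (t • cubeBall n))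
    {k : Fin n → ℝ} (hk : k ∈ K) : ∃ c ∈ s, ∀ i, |k i - c i| ≤ t := by
  have h := hs hk
  simp only [Set.mem_iUnion] at h
  obtain ⟨c, hc, y, ⟨b, hb, rfl⟩, rfl⟩ := h
  refine ⟨c, hc, fun i => ?_⟩
  have hbi := hb i
  simp only [Pi.add_apply, Pi.smul_apply, smul_eq_mul, add_sub_cancel_left, abs_mul, abs_of_pos ht]
  nlinarith

lemma exists_cover_of_isCompact {n : ℕ} {K : Set (Fin n → ℝ)} {t : ℝ} (ht : 0 < t)
    (hK : IsCompact K) :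
    ∃ s : Finset (Fin n → ℝ), K ⊆ ⋃ c ∈ s, (fun y => c + y) '' (t • cubeBall n) := by
  obtain ⟨s, -, hfin, hs⟩ := hK.finite_cover_balls ht
  refine ⟨hfin.toFinset, fun k hk => ?_⟩
  have h := hs hk
  simp only [Set.mem_iUnion] at h ⊢
  obtain ⟨c, hc, hkc⟩ := h
  refine ⟨c, hfin.mem_toFinset.2 hc, k - c, ⟨t⁻¹ • (k - c), fun i => ?_, ?_⟩, by simp⟩
  · have h1 : |k i - c i| ≤ t := by
      have := dist_le_pi_dist k c i
      rw [Real.dist_eq] at this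
      exact this.trans (Metric.mem_ball.1 hkc).le
    simp only [Pi.smul_apply, Pi.sub_apply, smul_eq_mul, abs_mul, abs_inv, abs_of_pos ht]
    rw [inv_mul_le_iff₀ ht]
    simpa using h1
  · exact smul_inv_smul₀ ht.ne' _

/-- The separation argument: points of `K` above the grid `x + {0, 3t, 6t}^σ` need pairwise
different members of the cover. -/
lemma three_pow_card_le_of_cover {n : ℕ} {K : Set (Fin n → ℝ)} {t : ℝ} (ht : 0 < t)
    {s : Finset (Fin n → ℝ)} (hs : K ⊆ ⋃ c ∈ s, (fun y => c + y) '' (t • cubeBall n))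
    {σ : Finset (Fin n)} {x : Fin n → ℝ}
    (hx : ∀ z : Fin n → ℝ, (∀ i ∈ σ, z i ∈ Set.Icc (x i) (x i + 6 * t)) →
      ∃ k ∈ K, ∀ i ∈ σ, k i = z i) : 3 ^ σ.card ≤ s.card := by
  have key : ∀ f : σ → Fin 3, ∃ c : s, ∀ i : σ,
      |x i + 3 * t * ((f i : ℕ) : ℝ) - c.1 i| ≤ t := by
    intro f
    obtain ⟨k, hk, hkz⟩ := hx
      (fun i => if h : i ∈ σ then x i + 3 * t * ((f ⟨i, h⟩ : ℕ) : ℝ) else 0) (by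
        intro i hi
        have h2 : ((f ⟨i, hi⟩ : ℕ) : ℝ) ≤ 2 := by
          exact_mod_cast Nat.le_of_lt_succ (f ⟨i, hi⟩).2
        have h0 : (0 : ℝ) ≤ ((f ⟨i, hi⟩ : ℕ) : ℝ) := Nat.cast_nonneg _
        simp only [hi, dif_pos, Set.mem_Icc]
        constructor <;> nlinarith)
    obtain ⟨c, hc, hkc⟩ := exists_abs_sub_le_of_mem_cover ht hs hk
    refine ⟨⟨c, hc⟩, fun i => ?_⟩
    have h1 := hkc i
    rw [hkz i i.2] at h1
    simpa using h1
  choose c hc using key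
  have hinj : Function.Injective c := by
    intro f g hfg
    funext i
    have h1 := abs_le.1 (hc f i)
    have h2 := abs_le.1 (hc g i)
    rw [hfg] at h1
    -- Distinct natural numbers would differ by at least `1`, hence the grid points by `3 * t`.
    by_contra hne
    have hne' : (f i : ℕ) ≠ (g i : ℕ) := fun h => hne (Fin.ext h)
    rcases lt_or_gt_of_ne hne' with h | h
    · have h' : ((f i : ℕ) : ℝ) + 1 ≤ ((g i : ℕ) : ℝ) := by exact_mod_cast h
      nlinarith
    · have h' : ((g i : ℕ) : ℝ) + 1 ≤ ((f i : ℕ) : ℝ) := by exact_mod_cast h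
      nlinarith
  simpa using Fintype.card_le_of_injective c hinj

theorem vc_le_entropy_cube :
    ∃ c : ℝ, 0 < c ∧
      ∀ (n : ℕ) (K : Set (Fin n → ℝ)) (t : ℝ),
        IsCompact K → Convex ℝ K → (interior K).Nonempty → K ⊆ cubeBall n →
        0 < t → t < 1 →
        (vcDim K (c * t) : ℝ) ≤ Real.log (covN K (cubeBall n) t) := by
  refine ⟨6, by norm_num, fun n K t hK _ hne _ ht _ => ?_⟩
  have hcov : covN K (cubeBall n) t ∈ {m : ℕ | ∃ s : Finset (Fin n → ℝ), s.card = m ∧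
      K ⊆ ⋃ c ∈ s, (fun y => c + y) '' (t • cubeBall n)} := by
    obtain ⟨s, hs⟩ := exists_cover_of_isCompact ht hK
    exact Nat.sInf_mem ⟨s.card, s, rfl, hs⟩
  have hvc : vcDim K (6 * t) ∈ {m : ℕ | ∃ σ : Finset (Fin n), σ.card = m ∧ ∃ x : Fin n → ℝ,
      ∀ z : Fin n → ℝ, (∀ i ∈ σ, z i ∈ Set.Icc (x i) (x i + 6 * t)) →
        ∃ k ∈ K, ∀ i ∈ σ, k i = z i} := by
    refine Nat.sSup_mem ?_ ?_
    · obtain ⟨k, hk⟩ := hne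
      exact ⟨0, ∅, rfl, 0, fun z _ => ⟨k, interior_subset hk, by simp⟩⟩
    · refine ⟨n, ?_⟩
      rintro m ⟨σ, rfl, -⟩
      simpa using σ.card_le_univ
  obtain ⟨s, hsc, hs⟩ := hcov
  obtain ⟨σ, hσ, x, hx⟩ := hvc
  have h3 : (3 : ℝ) ^ σ.card ≤ (s.card : ℝ) := by
    exact_mod_cast three_pow_card_le_of_cover ht hs hx
  rw [← hsc, ← hσ, Real.le_log_iff_exp_le (lt_of_lt_of_le (by positivity) h3)]
  calc Real.exp (σ.card : ℝ) = Real.exp 1 ^ σ.card := by rw [← Real.exp_nat_mul, mul_one]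
    _ ≤ 3 ^ σ.card := by
      gcongr
      linarith [Real.exp_one_lt_d9]
    _ ≤ _ := h3
end

section
/- Let (T,d) be a quasi-metric space with diam(T) ≤ 1, let 0 < ε < 1, and let A ⊂ T^n be a set such that every two distinct points x, y ∈ A are separated (i.e., d(x(i),y(i)) > 0) on at least εn coordinates i. Then log |A| ≤ C log²(|T|/ε) · VC_d(A), where C is an absolute constant. -/
/-!
The proof counts shattered products, that is, products of separated pairs contained in a coordinate
projection. Write `N = |A|`, `L = log (|T| / ε)` and let `v` be the VC dimension.

*Extraction* (`exists_extraction`). By a Chernoff bound and a union bound over pairs of points, a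
random list of `m ≲ log N / ε` coordinates still separates any two points of `A` on a proportion
`ε / 4` of the list. Repeated coordinates do no harm (`card_support_le_vcDimQ₀`).

*Lower bound* (`two_pow_le_card_shattered`). Double counting gives a coordinate `i` and a
separated pair `(a, b)` such that both slices `{x | x i = a}` and `{x | x i = b}` contain at least a
proportion `1 / K` of the points, `K = 8 |T| ^ 2 / ε`. A product shattered by both slices yields
two shattered by the whole set, with and without the pair `(a, b)` at `i`. The number of shattered
products therefore at least doubles, and it is at least `2 ^ r` once `N ≥ K ^ r`.

*Upper bound* (`card_mul_pow_le`). All shattered products have at most `v` factors, so for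
`0 < lam ≤ 1` their number is at most `lam ^ (-v) * (1 + lam * |T| ^ 2) ^ m`.

Taking `r ≈ log N / log K` and comparing, `r log 2 ≤ lam |T| ^ 2 m + v log (1 / lam)`. For `lam` a
small multiple of `ε / (|T| ^ 2 log K)` the first term on the right is at most half of the left
side, up to the rounding of `r`, and `log N ≲ log K · log (1 / lam) · v ≲ L ^ 2 v` remains.
-/

/-- The covering number `N(A, ρ, ε)` of a set `A` in a quasi-metric space `(S, ρ)`:
the minimal number of `ρ`-balls of radius `ε` needed to cover `A`. -/
noncomputable def covNQMetric {S : Type*} (ρ : S → S → ℝ) (A : Set S) (ε : ℝ) : ℕ :=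
  sInf {m : ℕ | ∃ s : Finset S, s.card = m ∧ ∀ a ∈ A, ∃ c ∈ s, ρ a c ≤ ε}

/-- The VC dimension `VC_d(A, t)` of `A ⊆ Tⁿ` at scale `t`, with respect to the quasi-metric
`d` on `T`: the maximal cardinality of a set `σ` of coordinates such that the projection of `A`
onto the coordinates in `σ` contains a product `∏_{i ∈ σ} {a i, b i}` with `d (a i) (b i) ≥ t`
for all `i ∈ σ`. -/
noncomputable def vcDimQ {T : Type*} {n : ℕ} (d : T → T → ℝ) (A : Set (Fin n → T))
    (t : ℝ) : ℕ :=
  sSup {m : ℕ | ∃ σ : Finset (Fin n), σ.card = m ∧ ∃ a b : Fin n → T,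
    (∀ i ∈ σ, t ≤ d (a i) (b i)) ∧
    ∀ z : Fin n → T, (∀ i ∈ σ, z i = a i ∨ z i = b i) → ∃ k ∈ A, ∀ i ∈ σ, k i = z i}

/-- The VC dimension `VC_d(A)` of `A ⊆ Tⁿ` with respect to the quasi-metric `d` on `T`:
the maximal cardinality of a set `σ` of coordinates such that the projection of `A` onto the
coordinates in `σ` contains a product `∏_{i ∈ σ} {a i, b i}` of pairs of separated points. -/
noncomputable def vcDimQ₀ {T : Type*} {n : ℕ} (d : T → T → ℝ) (A : Set (Fin n → T)) : ℕ :=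
  sSup {m : ℕ | ∃ σ : Finset (Fin n), σ.card = m ∧ ∃ a b : Fin n → T,
    (∀ i ∈ σ, 0 < d (a i) (b i)) ∧
    ∀ z : Fin n → T, (∀ i ∈ σ, z i = a i ∨ z i = b i) → ∃ k ∈ A, ∀ i ∈ σ, k i = z i}

/-! ### Counting shattered products from below -/

/-- A partial choice of pairs `g` (with `g i = none` off its support) is shattered by `B` when all
its pairs are separated and the projection of `B` onto the support of `g` contains the product of
the two-point sets given by `g`. This packages the data `(σ, a, b)` in the definition of the VC
dimension as a point of a finite type, so that shattered products can be counted. -/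
def Shattered {ι T : Type*} (d : T → T → ℝ) (B : Finset (ι → T)) (g : ι → Option (T × T)) : Prop :=
  (∀ i p, g i = some p → 0 < d p.1 p.2) ∧
  ∀ z : ι → T, (∀ i p, g i = some p → z i = p.1 ∨ z i = p.2) →
    ∃ k ∈ B, ∀ i p, g i = some p → k i = z i

theorem Shattered.mono {ι T : Type*} {d : T → T → ℝ} {B B' : Finset (ι → T)} (h : B ⊆ B')
    {g : ι → Option (T × T)} (hg : Shattered d B g) : Shattered d B' g :=
  ⟨hg.1, fun z hz => let ⟨k, hk, hkz⟩ := hg.2 z hz; ⟨k, h hk, hkz⟩⟩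

/-- A product shattered by a set with constant `i`-th coordinate does not involve `i`. -/
theorem Shattered.eq_none {ι T : Type*} {d : T → T → ℝ} (hd : ∀ x, d x x = 0)
    {B : Finset (ι → T)} {g : ι → Option (T × T)} (hg : Shattered d B g) {i : ι} {a : T}
    (hB : ∀ x ∈ B, x i = a) : g i = none := by
  classical
  by_contra hne
  obtain ⟨p, hp⟩ := Option.ne_none_iff_exists'.1 hne
  have hpos := hg.1 i p hp
  obtain ⟨k, hk, hkz⟩ := hg.2 (fun j => (g j).elim a Prod.fst) (by
    intro j q hq; left; simp [hq])
  obtain ⟨k', hk', hkz'⟩ := hg.2 (fun j => (g j).elim a Prod.snd) (by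
    intro j q hq; right; simp [hq])
  have h1 := hkz i p hp
  have h2 := hkz' i p hp
  rw [hB k hk] at h1
  rw [hB k' hk'] at h2
  simp only [hp, Option.elim_some] at h1 h2
  rw [← h1, ← h2, hd] at hpos
  exact lt_irrefl _ hpos

open Classical in
/-- A product shattered by both slices of `B` can be enlarged by the pair `(a, b)` at `i`. -/
theorem Shattered.update {ι T : Type*} {d : T → T → ℝ} {B : Finset (ι → T)}
    {g : ι → Option (T × T)} {i : ι} {a b : T} (hab : 0 < d a b) (hi : g i = none)
    (h1 : Shattered d {x ∈ B | x i = a} g) (h2 : Shattered d {x ∈ B | x i = b} g) :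
    Shattered d B (Function.update g i (some (a, b))) := by
  have key : ∀ c : T, Shattered d {x ∈ B | x i = c} g → ∀ z : ι → T,
      (∀ j p, Function.update g i (some (a, b)) j = some p → z j = p.1 ∨ z j = p.2) → z i = c →
      ∃ k ∈ B, ∀ j p, Function.update g i (some (a, b)) j = some p → k j = z j := by
    intro c hc z hz hzi
    obtain ⟨k, hk, hkz⟩ := hc.2 z (by
      intro j p hp
      refine hz j p ?_
      rwa [Function.update_of_ne]
      rintro rfl
      simp [hi] at hp)
    rw [Finset.mem_filter] at hk
    refine ⟨k, hk.1, fun j p hp => ?_⟩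
    by_cases hj : j = i
    · rw [hj, hk.2, hzi]
    · rw [Function.update_of_ne hj] at hp
      exact hkz j p hp
  refine ⟨fun j p hp => ?_, fun z hz => ?_⟩
  · by_cases hj : j = i
    · subst hj
      simp only [Function.update_self, Option.some.injEq] at hp
      rw [← hp]; exact hab
    · rw [Function.update_of_ne hj] at hp
      exact h1.1 j p hp
  · rcases hz i (a, b) (by simp) with h | h
    · exact key a h1 z hz h
    · exact key b h2 z hz h

open Classical in
/-- Two slices of `B` along a separated pair: the products shattered by either slice, together with
the enlargements of those shattered by both, are distinct products shattered by `B`. -/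
theorem card_shattered_add_le {ι T : Type*} [Fintype ι] [Fintype T] {d : T → T → ℝ}
    (hd : ∀ x, d x x = 0) {B : Finset (ι → T)} {i : ι} {a b : T} (hab : 0 < d a b) :
    Finset.card {g | Shattered d {x ∈ B | x i = a} g} +
      Finset.card {g | Shattered d {x ∈ B | x i = b} g} ≤ Finset.card {g | Shattered d B g} := by
  set S1 : Finset (ι → Option (T × T)) := {g | Shattered d {x ∈ B | x i = a} g} with hS1
  set S2 : Finset (ι → Option (T × T)) := {g | Shattered d {x ∈ B | x i = b} g} with hS2
  have hn1 : ∀ g ∈ S1, g i = none := by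
    intro g hg
    simp only [hS1, Finset.mem_filter, Finset.mem_univ, true_and] at hg
    exact hg.eq_none hd (a := a) (by simp)
  have hn2 : ∀ g ∈ S2, g i = none := by
    intro g hg
    simp only [hS2, Finset.mem_filter, Finset.mem_univ, true_and] at hg
    exact hg.eq_none hd (a := b) (by simp)
  set U := (S1 ∩ S2).image (fun g => Function.update g i (some (a, b))) with hU
  have hUcard : U.card = (S1 ∩ S2).card := by
    apply Finset.card_image_of_injOn
    intro g hg g' hg' h
    have e1 := hn1 g (Finset.mem_inter.1 hg).1
    have e2 := hn1 g' (Finset.mem_inter.1 hg').1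
    funext j
    by_cases hj : j = i
    · rw [hj, e1, e2]
    · simpa [Function.update_of_ne hj] using congrFun h j
  have hdisj : Disjoint (S1 ∪ S2) U := by
    rw [Finset.disjoint_left]
    intro g hg hgU
    obtain ⟨g', -, rfl⟩ := Finset.mem_image.1 hgU
    rcases Finset.mem_union.1 hg with h | h
    · simpa using hn1 _ h
    · simpa using hn2 _ h
  rw [← Finset.card_union_add_card_inter, ← hUcard, ← Finset.card_union_of_disjoint hdisj]
  apply Finset.card_le_card
  intro g hg
  simp only [Finset.mem_filter, Finset.mem_univ, true_and]
  rcases Finset.mem_union.1 hg with h | h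
  · rcases Finset.mem_union.1 h with h | h
    · simp only [hS1, Finset.mem_filter, Finset.mem_univ, true_and] at h
      exact h.mono (Finset.filter_subset _ _)
    · simp only [hS2, Finset.mem_filter, Finset.mem_univ, true_and] at h
      exact h.mono (Finset.filter_subset _ _)
  · obtain ⟨g', hg', rfl⟩ := Finset.mem_image.1 h
    obtain ⟨h1, h2⟩ := Finset.mem_inter.1 hg'
    have hi := hn1 g' h1
    simp only [hS1, hS2, Finset.mem_filter, Finset.mem_univ, true_and] at h1 h2
    exact Shattered.update hab hi h1 h2

open Classical in
/-- Pigeonhole: in a well separated set some coordinate `i` and some separated pair `(a, b)` are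
realized by many pairs of points, hence both slices `x i = a` and `x i = b` are large. -/
theorem exists_large_slices {ι T : Type*} [Fintype ι] [Fintype T] {d : T → T → ℝ}
    {δ : ℝ} (hδ : 0 < δ) {B : Finset (ι → T)}
    (hB : ∀ x ∈ B, ∀ y ∈ B, x ≠ y →
      δ * Fintype.card ι ≤ (Finset.card {i | 0 < d (x i) (y i)} : ℝ))
    (hcard : 2 ≤ B.card) :
    ∃ (i : ι) (a b : T), 0 < d a b ∧
      (B.card : ℝ) ≤ 2 * (Fintype.card T : ℝ) ^ 2 / δ * Finset.card {x ∈ B | x i = a} ∧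
      (B.card : ℝ) ≤ 2 * (Fintype.card T : ℝ) ^ 2 / δ * Finset.card {x ∈ B | x i = b} := by
  obtain ⟨x, hx, y, hy, hxy⟩ := Finset.one_lt_card.1 hcard
  obtain ⟨i₀, hi₀⟩ := Function.ne_iff.1 hxy
  have : Nonempty ι := ⟨i₀⟩
  have : Nonempty T := ⟨x i₀⟩
  have hN : (2 : ℝ) ≤ B.card := by exact_mod_cast hcard
  have hι : (0 : ℝ) < Fintype.card ι := by exact_mod_cast Fintype.card_pos
  have hq : (0 : ℝ) < Fintype.card T := by exact_mod_cast Fintype.card_pos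
  set N : ℝ := (B.card : ℝ) with hNdef
  set q : ℝ := (Fintype.card T : ℝ) with hqdef
  set P := B.offDiag.sigma (fun p => ({i | 0 < d (p.1 i) (p.2 i)} : Finset ι)) with hP
  have hPcard : N * (N - 1) * (δ * Fintype.card ι) ≤ (P.card : ℝ) := by
    rw [hP, Finset.card_sigma, Nat.cast_sum]
    have : (B.offDiag.card : ℝ) = N * (N - 1) := by
      rw [Finset.offDiag_card, Nat.cast_sub (Nat.le_mul_self _)]
      push_cast; ring
    rw [← this, ← nsmul_eq_mul]
    apply Finset.card_nsmul_le_sum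
    intro p hp
    obtain ⟨h1, h2, h3⟩ := Finset.mem_offDiag.1 hp
    exact hB _ h1 _ h2 h3
  obtain ⟨⟨i, a, b⟩, -, hfib⟩ := Finset.exists_le_card_fiber_of_nsmul_le_card_of_maps_to
    (s := P) (t := (Finset.univ : Finset (ι × T × T)))
    (f := fun e => (e.2, e.1.1 e.2, e.1.2 e.2)) (b := N * (N - 1) * δ / q ^ 2)
    (fun _ _ => Finset.mem_univ _) Finset.univ_nonempty (by
      refine le_trans (le_of_eq ?_) hPcard
      rw [nsmul_eq_mul, Finset.card_univ, Fintype.card_prod, Fintype.card_prod]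
      push_cast
      rw [← hqdef]
      field_simp)
  set F := P.filter (fun e => (e.2, e.1.1 e.2, e.1.2 e.2) = (i, a, b)) with hF
  have hMpos : 0 < N * (N - 1) * δ / q ^ 2 := by
    have : 0 < N - 1 := by linarith
    positivity
  have hab : 0 < d a b := by
    have : 0 < F.card := by
      have := lt_of_lt_of_le hMpos hfib
      exact_mod_cast this
    obtain ⟨e, he⟩ := Finset.card_pos.1 this
    simp only [hF, hP, Finset.mem_filter, Finset.mem_sigma, Finset.mem_univ, true_and,
      Prod.mk.injEq] at he
    obtain ⟨⟨-, h⟩, rfl, rfl, rfl⟩ := he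
    exact h
  have hFle : F.card ≤
      Finset.card {x ∈ B | x i = a} * Finset.card {x ∈ B | x i = b} := by
    rw [← Finset.card_product]
    apply Finset.card_le_card_of_injOn (fun e => e.1)
    · intro e he
      simp only [hF, hP, Finset.coe_filter, Set.mem_ofPred_eq, Finset.mem_sigma,
        Finset.mem_offDiag, Prod.mk.injEq] at he
      obtain ⟨⟨⟨h1, h2, -⟩, -⟩, rfl, rfl, rfl⟩ := he
      simp [h1, h2]
    · rintro ⟨e, j⟩ he ⟨e', j'⟩ he' h
      simp only [hF, Finset.coe_filter, Set.mem_ofPred_eq, Prod.mk.injEq] at he he'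
      simp only at h
      subst h
      rw [he.2.1, he'.2.1]
  have hle : ∀ c : T, (Finset.card {x ∈ B | x i = c} : ℝ) ≤ N := fun c => by
    rw [hNdef, Nat.cast_le]
    exact Finset.card_filter_le _ _
  have hprod : N * (N - 1) * δ / q ^ 2 ≤
      (Finset.card {x ∈ B | x i = a} : ℝ) * Finset.card {x ∈ B | x i = b} :=
    hfib.trans (by exact_mod_cast hFle)
  have fin : ∀ u w : ℝ, 0 ≤ u → w ≤ N → N * (N - 1) * δ / q ^ 2 ≤ u * w →
      N ≤ 2 * q ^ 2 / δ * u := by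
    intro u w hu hw h
    have h1 : N * ((N - 1) * δ / q ^ 2) ≤ N * u := by
      calc _ = N * (N - 1) * δ / q ^ 2 := by ring
        _ ≤ u * w := h
        _ ≤ u * N := by gcongr
        _ = N * u := mul_comm _ _
    have h2 := le_of_mul_le_mul_left h1 (by linarith)
    calc N ≤ 2 * (N - 1) := by linarith
      _ = 2 * q ^ 2 / δ * ((N - 1) * δ / q ^ 2) := by field_simp
      _ ≤ _ := by gcongr
  exact ⟨i, a, b, hab, fin _ _ (by positivity) (hle b) hprod,
    fin _ _ (by positivity) (hle a) (hprod.trans_eq (mul_comm _ _))⟩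

open Classical in
/-- A well separated set of size at least `K ^ r` shatters at least `2 ^ r` products: pass to two
large slices, each of which inherits the separation hypothesis, and iterate. -/
theorem two_pow_le_card_shattered {ι T : Type*} [Fintype ι] [Fintype T] {d : T → T → ℝ}
    (hd : ∀ x, d x x = 0) {δ K : ℝ} (hδ : 0 < δ) (hK : 2 * (Fintype.card T : ℝ) ^ 2 / δ ≤ K)
    (hK2 : 2 ≤ K) (r : ℕ) (B : Finset (ι → T))
    (hB : ∀ x ∈ B, ∀ y ∈ B, x ≠ y →
      δ * Fintype.card ι ≤ (Finset.card {i | 0 < d (x i) (y i)} : ℝ))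
    (hcard : K ^ r ≤ B.card) :
    2 ^ r ≤ Finset.card {g | Shattered d B g} := by
  induction r generalizing B with
  | zero =>
    have h1 : 0 < B.card := by
      have : (1 : ℝ) ≤ B.card := by simpa using hcard
      exact_mod_cast lt_of_lt_of_le zero_lt_one this
    obtain ⟨k, hk⟩ := Finset.card_pos.1 h1
    rw [pow_zero]
    refine Finset.card_pos.2 ⟨fun _ => none, ?_⟩
    simp only [Finset.mem_filter, Finset.mem_univ, true_and]
    exact ⟨fun i p h => by simp at h, fun z _ => ⟨k, hk, fun i p h => by simp at h⟩⟩
  | succ r ih =>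
    have hKr : (1 : ℝ) ≤ K ^ r := one_le_pow₀ (by linarith)
    have h2 : 2 ≤ B.card := by
      have : (2 : ℝ) ≤ B.card := by
        rw [pow_succ] at hcard; nlinarith
      exact_mod_cast this
    obtain ⟨i, a, b, hab, ha, hb⟩ := exists_large_slices hδ hB h2
    have step : ∀ c : T,
        (B.card : ℝ) ≤ 2 * (Fintype.card T : ℝ) ^ 2 / δ * Finset.card {x ∈ B | x i = c} →
        2 ^ r ≤ Finset.card {g | Shattered d {x ∈ B | x i = c} g} := by
      intro c hc
      refine ih _ (fun x hx y hy => hB x (Finset.mem_filter.1 hx).1 y (Finset.mem_filter.1 hy).1) ?_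
      have h3 : K * K ^ r ≤ K * (Finset.card {x ∈ B | x i = c} : ℝ) := by
        calc K * K ^ r = K ^ (r + 1) := by ring
          _ ≤ _ := hcard
          _ ≤ _ := hc
          _ ≤ _ := by gcongr
      exact le_of_mul_le_mul_left h3 (by linarith)
    calc 2 ^ (r + 1) = 2 ^ r + 2 ^ r := by ring
      _ ≤ _ := add_le_add (step a ha) (step b hb)
      _ ≤ _ := card_shattered_add_le hd hab

/-! ### Counting shattered products from above -/

open Classical in
/-- Exponential-moment bound for the number of partial choices of pairs with at most `v` pairs. -/
theorem card_mul_pow_le {ι T : Type*} [Fintype ι] [Fintype T] {lam : ℝ} (h0 : 0 < lam)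
    (h1 : lam ≤ 1) (v : ℕ) (S : Finset (ι → Option (T × T)))
    (hS : ∀ g ∈ S, Finset.card {i | g i ≠ none} ≤ v) :
    (S.card : ℝ) * lam ^ v ≤ Real.exp (lam * (Fintype.card T : ℝ) ^ 2 * Fintype.card ι) := by
  set w : Option (T × T) → ℝ := fun o => if o ≠ none then lam else 1 with hw
  have hw0 : ∀ o, 0 ≤ w o := fun o => by
    simp only [hw]; split_ifs <;> linarith
  calc (S.card : ℝ) * lam ^ v = ∑ g ∈ S, lam ^ v := by simp
    _ ≤ ∑ g ∈ S, ∏ i, w (g i) := by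
        refine Finset.sum_le_sum fun g hg => ?_
        rw [Finset.prod_ite, Finset.prod_const, Finset.prod_const_one, mul_one]
        exact pow_le_pow_of_le_one h0.le h1 (hS g hg)
    _ ≤ ∑ g : ι → Option (T × T), ∏ i, w (g i) :=
        Finset.sum_le_sum_of_subset_of_nonneg (Finset.subset_univ _)
          fun g _ _ => Finset.prod_nonneg fun i _ => hw0 _
    _ = (1 + lam * (Fintype.card T : ℝ) ^ 2) ^ Fintype.card ι := by
        rw [← Fintype.prod_sum (fun (_ : ι) o => w o), Finset.prod_const, Finset.card_univ,
          Fintype.sum_option]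
        simp [hw, Fintype.card_prod]
        ring
    _ ≤ Real.exp (lam * (Fintype.card T : ℝ) ^ 2) ^ Fintype.card ι := by
        gcongr
        rw [add_comm]; exact Real.add_one_le_exp _
    _ = _ := by rw [← Real.exp_nat_mul]; ring_nf

/-! ### Extraction of few coordinates -/

open Classical in
/-- Chernoff bound in counting form: if `S` has density at least `ε`, then few choices of `m`
coordinates meet `S` fewer than `ε m / 4` times. -/
theorem card_bad_le {m n : ℕ} {ε : ℝ} (S : Finset (Fin n))
    (hS : ε * n ≤ S.card) :
    (Finset.card {f : Fin m → Fin n | (Finset.card {j | f j ∈ S} : ℝ) < ε / 4 * m} : ℝ)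
      ≤ Real.exp (-(ε * m / 4)) * (n : ℝ) ^ m := by
  set w : Fin n → ℝ := fun i => if i ∈ S then 1 / 2 else 1 with hw
  have hw0 : ∀ o, 0 ≤ w o := fun o => by
    simp only [hw]; split_ifs <;> norm_num
  set Bad : Finset (Fin m → Fin n) :=
    {f : Fin m → Fin n | (Finset.card {j | f j ∈ S} : ℝ) < ε / 4 * m} with hBad
  have h2 : Real.exp (-1) ≤ 1 / 2 := by
    rw [Real.exp_neg, one_div]
    exact inv_anti₀ (by norm_num) (by have := Real.add_one_le_exp (1 : ℝ); linarith)
  have hsum : ∑ i, w i ≤ Real.exp (-(ε / 2)) * n := by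
    have e : ∑ i, w i = n - S.card / 2 := by
      have : ∀ i, w i = 1 - (if i ∈ S then (1 / 2 : ℝ) else 0) := by
        intro i; simp only [hw]; split_ifs <;> norm_num
      simp only [this, Finset.sum_sub_distrib]
      simp
      ring
    have := Real.add_one_le_exp (-(ε / 2))
    have hn : (0 : ℝ) ≤ n := Nat.cast_nonneg n
    rw [e]
    nlinarith
  have key : (Bad.card : ℝ) * Real.exp (-(ε * m / 4)) ≤ Real.exp (-(ε * m / 2)) * (n : ℝ) ^ m := by
    calc (Bad.card : ℝ) * Real.exp (-(ε * m / 4)) = ∑ g ∈ Bad, Real.exp (-(ε * m / 4)) := by simp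
      _ ≤ ∑ g ∈ Bad, ∏ j, w (g j) := by
        refine Finset.sum_le_sum fun g hg => ?_
        rw [Finset.prod_ite, Finset.prod_const, Finset.prod_const_one, mul_one]
        simp only [hBad, Finset.mem_filter, Finset.mem_univ, true_and] at hg
        calc Real.exp (-(ε * m / 4)) ≤ Real.exp (-(Finset.card {j | g j ∈ S} : ℝ)) := by
              apply Real.exp_le_exp.2; linarith
          _ = Real.exp (-1) ^ (Finset.card {j | g j ∈ S}) := by
              rw [← Real.exp_nat_mul]; ring_nf
          _ ≤ _ := by gcongr
      _ ≤ ∑ g : Fin m → Fin n, ∏ j, w (g j) :=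
        Finset.sum_le_sum_of_subset_of_nonneg (Finset.subset_univ _)
          fun g _ _ => Finset.prod_nonneg fun i _ => hw0 _
      _ = (∑ i, w i) ^ m := by
        rw [← Fintype.prod_sum (fun (_ : Fin m) o => w o), Finset.prod_const, Finset.card_univ,
          Fintype.card_fin]
      _ ≤ (Real.exp (-(ε / 2)) * n) ^ m := by
        gcongr
      _ = _ := by rw [mul_pow, ← Real.exp_nat_mul]; ring_nf
  have e : Real.exp (-(ε * m / 2)) = Real.exp (-(ε * m / 4)) * Real.exp (-(ε * m / 4)) := by
    rw [← Real.exp_add]; ring_nf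
  rw [e] at key
  have hp := Real.exp_pos (-(ε * m / 4))
  refine le_of_mul_le_mul_right ?_ hp
  linarith

open Classical in
/-- Random extraction: some list of `m` coordinates, `m` of order `log |B| / ε`, preserves the
separation of `B` up to the factor `1 / 4`, by a union bound over the pairs of points. -/
theorem exists_extraction {T : Type*} {d : T → T → ℝ} {m n : ℕ} {ε : ℝ}
    (hn : 0 < n) (B : Finset (Fin n → T))
    (hB : ∀ x ∈ B, ∀ y ∈ B, x ≠ y →
      ε * n ≤ (Finset.card {i | 0 < d (x i) (y i)} : ℝ))
    (hm : (B.card : ℝ) ^ 2 * Real.exp (-(ε * m / 4)) < 1) :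
    ∃ f : Fin m → Fin n, ∀ x ∈ B, ∀ y ∈ B, x ≠ y →
      ε / 4 * m ≤ (Finset.card {j | 0 < d (x (f j)) (y (f j))} : ℝ) := by
  by_contra! hcon
  have hn' : (0 : ℝ) < n := by exact_mod_cast hn
  set Bad : (Fin n → T) × (Fin n → T) → Finset (Fin m → Fin n) := fun p =>
    {f | (Finset.card {j | f j ∈ ({i | 0 < d (p.1 i) (p.2 i)} : Finset (Fin n))} : ℝ)
      < ε / 4 * m} with hBad
  have hcover : (Finset.univ : Finset (Fin m → Fin n)) ⊆ B.offDiag.biUnion Bad := by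
    intro f _
    obtain ⟨x, hx, y, hy, hxy, h⟩ := hcon f
    rw [Finset.mem_biUnion]
    exact ⟨(x, y), Finset.mem_offDiag.2 ⟨hx, hy, hxy⟩, by simpa [hBad] using h⟩
  have h1 : (n : ℝ) ^ m ≤ ∑ p ∈ B.offDiag, ((Bad p).card : ℝ) := by
    have := (Finset.card_le_card hcover).trans Finset.card_biUnion_le
    rw [Finset.card_univ, Fintype.card_fun, Fintype.card_fin, Fintype.card_fin] at this
    exact_mod_cast this
  have h2 : ∑ p ∈ B.offDiag, ((Bad p).card : ℝ) ≤
      B.offDiag.card • (Real.exp (-(ε * m / 4)) * (n : ℝ) ^ m) := by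
    apply Finset.sum_le_card_nsmul
    intro p hp
    obtain ⟨hx, hy, hxy⟩ := Finset.mem_offDiag.1 hp
    exact card_bad_le _ (hB _ hx _ hy hxy)
  have h3 : (B.offDiag.card : ℝ) ≤ (B.card : ℝ) ^ 2 := by
    rw [Finset.offDiag_card, pow_two]
    exact_mod_cast Nat.sub_le _ _
  rw [nsmul_eq_mul] at h2
  have hnm : (0 : ℝ) < (n : ℝ) ^ m := by positivity
  have h4 : (n : ℝ) ^ m ≤ (B.card : ℝ) ^ 2 * Real.exp (-(ε * m / 4)) * (n : ℝ) ^ m := by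
    calc _ ≤ _ := h1.trans h2
      _ ≤ (B.card : ℝ) ^ 2 * (Real.exp (-(ε * m / 4)) * (n : ℝ) ^ m) := by gcongr
      _ = _ := by ring
  nlinarith

/-! ### Shattered products and the VC dimension -/

/-- The supremum defining the VC dimension is over a set bounded by `n`, hence not a junk value. -/
theorem le_vcDimQ₀ {T : Type*} {n : ℕ} {d : T → T → ℝ} {A : Set (Fin n → T)}
    (σ : Finset (Fin n)) (a b : Fin n → T) (hab : ∀ i ∈ σ, 0 < d (a i) (b i))
    (h : ∀ z : Fin n → T, (∀ i ∈ σ, z i = a i ∨ z i = b i) → ∃ k ∈ A, ∀ i ∈ σ, k i = z i) :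
    σ.card ≤ vcDimQ₀ d A := by
  apply le_csSup
  · refine ⟨n, ?_⟩
    rintro m ⟨τ, rfl, -⟩
    simpa using Finset.card_le_univ τ
  · exact ⟨σ, rfl, a, b, hab, h⟩

open Classical in
/-- Restricting to a list `f` of coordinates, possibly with repetitions, does not increase the VC
dimension: `f` is injective on the support of a shattered product, since a repeated coordinate
could not take the two independent values demanded by a product of separated pairs. -/
theorem card_support_le_vcDimQ₀ {T : Type*} {m n : ℕ} {d : T → T → ℝ} (hd : ∀ x, d x x = 0)
    {A : Finset (Fin n → T)} (f : Fin m → Fin n) {g : Fin m → Option (T × T)}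
    (hg : Shattered d (A.image fun x => x ∘ f) g) :
    Finset.card {j | g j ≠ none} ≤ vcDimQ₀ d (A : Set (Fin n → T)) := by
  set τ : Finset (Fin m) := {j | g j ≠ none} with hτ
  have hmem : ∀ {j}, j ∈ τ → ∃ p, g j = some p := by
    intro j hj
    simpa [hτ, Option.ne_none_iff_exists'] using hj
  have hmem' : ∀ {j p}, g j = some p → j ∈ τ := by
    intro j p h; simp [hτ, h]
  rcases τ.eq_empty_or_nonempty with h0 | ⟨j₀, hj₀⟩
  · simp [h0]
  obtain ⟨p₀, hp₀⟩ := hmem hj₀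
  have hinj : Set.InjOn f τ := by
    intro j hj j' hj' hff
    by_contra hne
    obtain ⟨p, hp⟩ := hmem hj
    obtain ⟨p', hp'⟩ := hmem hj'
    -- With the first point of the pair at `j`, both points of the pair at `j'` are attained.
    have key : ∀ c : T, c = p'.1 ∨ c = p'.2 → p.1 = c := by
      intro c hc
      obtain ⟨k, hk, hkz⟩ := hg.2
        (Function.update (fun l => (g l).elim p₀.1 Prod.fst) j' c) (by
          intro l q hq
          by_cases hl : l = j'
          · subst hl
            rw [hp'] at hq
            cases hq
            simpa using hc
          · left; simp [Function.update_of_ne hl, hq])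
      obtain ⟨x, -, rfl⟩ := Finset.mem_image.1 hk
      have e1 := hkz j p hp
      have e2 := hkz j' p' hp'
      rw [Function.update_of_ne hne] at e1
      simp only [Function.comp_apply, hp, Option.elim_some, Function.update_self] at e1 e2
      rw [← e1, ← e2, hff]
    have hpos := hg.1 j' p' hp'
    rw [← key _ (Or.inl rfl), ← key _ (Or.inr rfl), hd] at hpos
    exact lt_irrefl _ hpos
  rw [← Finset.card_image_of_injOn hinj]
  have : Nonempty (Fin m) := ⟨j₀⟩
  set s : Fin n → Fin m := Function.invFunOn f τ with hs
  have hsf : ∀ j ∈ τ, s (f j) = j := fun j hj => hinj.leftInvOn_invFunOn hj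
  refine le_vcDimQ₀ _ (fun i => (g (s i)).elim p₀.1 Prod.fst)
    (fun i => (g (s i)).elim p₀.1 Prod.snd) ?_ ?_
  · intro i hi
    obtain ⟨j, hj, rfl⟩ := Finset.mem_image.1 hi
    obtain ⟨p, hp⟩ := hmem hj
    simpa [hsf j hj, hp] using hg.1 j p hp
  · intro z hz
    obtain ⟨k, hk, hkz⟩ := hg.2 (z ∘ f) (by
      intro j p hp
      simpa [hsf j (hmem' hp), hp] using hz (f j) (Finset.mem_image_of_mem f (hmem' hp)))
    obtain ⟨x, hx, rfl⟩ := Finset.mem_image.1 hk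
    refine ⟨x, hx, fun i hi => ?_⟩
    obtain ⟨j, hj, rfl⟩ := Finset.mem_image.1 hi
    obtain ⟨p, hp⟩ := hmem hj
    exact hkz j p hp

/-! ### Comparison of the two bounds -/

open Classical in
/-- Combination of extraction, lower bound and upper bound on the number of shattered products. The
parameter `lam` is tuned so that the exponential moment absorbs at most half of
`log 2 * (log N / log K)`, where `r` is the integer part of `log N / log K`. -/
theorem log_card_le_of_two_le {T : Type*} [Fintype T] {d : T → T → ℝ} {n : ℕ}
    {A : Finset (Fin n → T)} {ε : ℝ} (hd : ∀ x, d x x = 0) (hε : 0 < ε) (hε1 : ε < 1)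
    (hT : 2 ≤ Fintype.card T) (hn : 0 < n) (hA : 2 ≤ A.card)
    (hsep : ∀ x ∈ A, ∀ y ∈ A, x ≠ y → ε * n ≤ (Finset.card {i | 0 < d (x i) (y i)} : ℝ))
    (hv : 1 ≤ vcDimQ₀ d (A : Set (Fin n → T))) :
    Real.log A.card ≤
      300 * (Real.log (Fintype.card T / ε)) ^ 2 * vcDimQ₀ d (A : Set (Fin n → T)) := by
  set v := vcDimQ₀ d (A : Set (Fin n → T)) with hvdef
  have hq2 : (2 : ℝ) ≤ Fintype.card T := by exact_mod_cast hT
  have hN2 : (2 : ℝ) ≤ A.card := by exact_mod_cast hA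
  have hv1 : (1 : ℝ) ≤ v := by exact_mod_cast hv
  set t : ℝ := (Fintype.card T : ℝ) with ht
  set N : ℝ := (A.card : ℝ) with hN
  set L := Real.log (t / ε) with hL
  have hl2 := Real.log_two_gt_d9
  have hl2' := Real.log_two_lt_d9
  have hlogN : Real.log 2 ≤ Real.log N := Real.log_le_log (by norm_num) hN2
  have hlogt : Real.log 2 ≤ Real.log t := Real.log_le_log (by norm_num) hq2
  have hlε : Real.log ε < 0 := Real.log_neg hε hε1
  have hLeq : L = Real.log t - Real.log ε := Real.log_div (by positivity) hε.ne'
  have hL2 : Real.log 2 ≤ L := by linarith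
  -- The number of extracted coordinates.
  set m := ⌊8 * Real.log N / ε⌋₊ + 1 with hm
  have hm1 : 8 * Real.log N / ε < m := by
    rw [hm]; push_cast; exact Nat.lt_floor_add_one _
  have hm2 : (m : ℝ) ≤ 12 * Real.log N / ε := by
    have h1 : (m : ℝ) ≤ 8 * Real.log N / ε + 1 := by
      rw [hm]; push_cast
      have := Nat.floor_le (a := 8 * Real.log N / ε) (by
        have : 0 ≤ Real.log N := by linarith
        positivity)
      linarith
    have h2 : 1 ≤ 4 * Real.log N / ε := by
      rw [le_div_iff₀ hε]; linarith
    calc (m : ℝ) ≤ 8 * Real.log N / ε + 4 * Real.log N / ε := by linarith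
      _ = _ := by ring
  have hm0 : (0 : ℝ) < m := by rw [hm]; positivity
  obtain ⟨f, hf⟩ := exists_extraction (d := d) (m := m) hn A hsep (by
    have h1 : N ^ 2 = Real.exp (2 * Real.log N) := by
      rw [two_mul, Real.exp_add, Real.exp_log (by linarith), pow_two]
    rw [← hN, h1, ← Real.exp_add, Real.exp_lt_one_iff]
    rw [div_lt_iff₀ hε] at hm1
    linarith)
  set B := A.image (fun x => x ∘ f) with hB
  have hBcard : B.card = A.card := by
    apply Finset.card_image_of_injOn
    intro x hx y hy hxy
    by_contra hne
    have h1 := hf x hx y hy hne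
    have h2 : Finset.card {j | 0 < d (x (f j)) (y (f j))} = 0 := by
      rw [Finset.card_eq_zero, Finset.filter_eq_empty_iff]
      intro j _
      have : x (f j) = y (f j) := congrFun hxy j
      simp [this, hd]
    rw [h2] at h1
    have : 0 < ε / 4 * m := by positivity
    norm_num at h1
    linarith
  set K : ℝ := 8 * t ^ 2 / ε with hK
  have hlogK : Real.log K = 3 * Real.log 2 + 2 * Real.log t - Real.log ε := by
    rw [hK, Real.log_div (by positivity) hε.ne', Real.log_mul (by norm_num) (by positivity),
      Real.log_pow, show (8 : ℝ) = 2 ^ 3 by norm_num, Real.log_pow]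
    push_cast; ring
  have hlogK1 : 1 ≤ Real.log K := by linarith
  have hlogK5 : Real.log K ≤ 5 * L := by linarith
  have hKpos : 0 < K := by positivity
  have hK2 : 2 ≤ K := by
    have := Real.add_one_le_exp (Real.log K)
    rw [Real.exp_log hKpos] at this
    linarith
  set r := ⌊Real.log N / Real.log K⌋₊ with hr
  have hlN0 : 0 ≤ Real.log N := by linarith
  have hr1 : Real.log N / Real.log K < r + 1 := Nat.lt_floor_add_one _
  have hr2 : (r : ℝ) ≤ Real.log N / Real.log K := Nat.floor_le (by positivity)
  have hKr : K ^ r ≤ N := by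
    rw [← Real.log_le_log_iff (by positivity) (by linarith), Real.log_pow]
    rwa [le_div_iff₀ (by linarith)] at hr2
  have hlow := two_pow_le_card_shattered (K := K) hd (δ := ε / 4) (by positivity)
    (le_of_eq (by rw [hK, ← ht]; field_simp; norm_num)) hK2 r B (by
      intro x hx y hy hxy
      obtain ⟨x', hx', rfl⟩ := Finset.mem_image.1 hx
      obtain ⟨y', hy', rfl⟩ := Finset.mem_image.1 hy
      have := hf x' hx' y' hy' (by rintro rfl; exact hxy rfl)
      simpa using this) (by rw [hBcard]; exact hKr)
  set lam : ℝ := ε / (48 * t ^ 2 * Real.log K) with hlam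
  have hlam0 : 0 < lam := by positivity
  have hlam1 : lam ≤ 1 := by
    rw [hlam, div_le_one (by positivity)]
    nlinarith
  have hup := card_mul_pow_le hlam0 hlam1 v (Finset.univ.filter fun g => Shattered d B g) (by
    intro g hg
    exact card_support_le_vcDimQ₀ hd f (Finset.mem_filter.1 hg).2)
  rw [← ht, Fintype.card_fin] at hup
  have hcomb : (2 : ℝ) ^ r * lam ^ v ≤ Real.exp (lam * t ^ 2 * m) := by
    refine le_trans ?_ hup
    gcongr
    -- The two counts differ by the decidability instance inside the `Fintype` of functions.
    have h : 2 ^ r ≤ (Finset.univ.filter fun g => Shattered d B g).card := by convert hlow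
    exact_mod_cast h
  have hlog : r * Real.log 2 + v * Real.log lam ≤ lam * t ^ 2 * m := by
    have := Real.log_le_log (by positivity) hcomb
    rwa [Real.log_exp, Real.log_mul (by positivity) (by positivity), Real.log_pow,
      Real.log_pow] at this
  have hexp : lam * t ^ 2 * m ≤ Real.log N / Real.log K / 4 := by
    calc lam * t ^ 2 * m ≤ lam * t ^ 2 * (12 * Real.log N / ε) := by gcongr
      _ = _ := by rw [hlam]; field_simp; ring
  have hloglam : -Real.log lam ≤ 13 * L := by
    have h1 : Real.log lam =
        Real.log ε - (Real.log 48 + 2 * Real.log t + Real.log (Real.log K)) := by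
      rw [hlam, Real.log_div hε.ne' (by positivity), Real.log_mul (by positivity) (by positivity),
        Real.log_mul (by norm_num) (by positivity), Real.log_pow]
      push_cast; ring
    have h2 : Real.log 48 ≤ 6 * Real.log 2 := by
      rw [show 6 * Real.log 2 = Real.log (2 ^ 6) by rw [Real.log_pow]; norm_num]
      exact Real.log_le_log (by norm_num) (by norm_num)
    have h3 : Real.log (Real.log K) ≤ Real.log K := Real.log_le_self (by linarith)
    linarith
  set X := Real.log N / Real.log K with hX
  have hX0 : 0 ≤ X := by positivity
  have hXv : X ≤ 60 * L * v := by
    have a1 : (X - 1) * Real.log 2 ≤ r * Real.log 2 := by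
      apply mul_le_mul_of_nonneg_right _ (by linarith); linarith
    have a2 : -(v * Real.log lam) ≤ 13 * (L * v) := by
      calc -(v * Real.log lam) = v * -Real.log lam := by ring
        _ ≤ v * (13 * L) := by gcongr
        _ = _ := by ring
    have a3 : X * (1 / 2) ≤ X * Real.log 2 := by gcongr; linarith
    have a4 : L ≤ L * v := le_mul_of_one_le_right (by linarith) hv1
    rw [mul_assoc]
    linarith
  calc Real.log N = Real.log K * X := by rw [hX]; field_simp
    _ ≤ (5 * L) * (60 * L * v) := by gcongr; linarith
    _ = _ := by ring

theorem card_le_vc_of_separated :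
    ∃ C : ℝ, 0 < C ∧
      ∀ (T : Type) [Fintype T] (d : T → T → ℝ) (n : ℕ) (A : Set (Fin n → T)) (ε : ℝ),
        (∀ x y, d x y = d y x) → (∀ x, d x x = 0) → (∀ x y, 0 ≤ d x y) →
        (∀ x y, d x y ≤ 1) →
        0 < ε → ε < 1 →
        (∀ x ∈ A, ∀ y ∈ A, x ≠ y →
          ε * n ≤ ({i : Fin n | 0 < d (x i) (y i)} : Set (Fin n)).ncard) →
        Real.log A.ncard ≤ C * (Real.log (Fintype.card T / ε)) ^ 2 * vcDimQ₀ d A := by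
  classical
  refine ⟨300, by norm_num, ?_⟩
  intro T _ d n A ε _ hd _ _ hε hε1 hsep
  have hfin : A.Finite := Set.toFinite A
  rcases Nat.lt_or_ge A.ncard 2 with h | hA
  · have : Real.log A.ncard = 0 := by interval_cases A.ncard <;> simp
    rw [this]; positivity
  lift A to Finset (Fin n → T) using hfin
  rw [Set.ncard_coe_finset] at hA ⊢
  have hsep' : ∀ x ∈ A, ∀ y ∈ A, x ≠ y →
      ε * n ≤ (Finset.card {i | 0 < d (x i) (y i)} : ℝ) := by
    intro x hx y hy hxy
    have := hsep x hx y hy hxy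
    rwa [← Set.ncard_coe_finset, Finset.coe_filter_univ]
  obtain ⟨x, hx, y, hy, hxy⟩ := Finset.one_lt_card.1 hA
  obtain ⟨i₀, hi₀⟩ := Function.ne_iff.1 hxy
  have hn : 0 < n := i₀.pos
  have hT : 2 ≤ Fintype.card T := Fintype.one_lt_card_iff.2 ⟨_, _, hi₀⟩
  refine log_card_le_of_two_le hd hε hε1 hT hn hA hsep' ?_
  have hpos : 0 < Finset.card {i | 0 < d (x i) (y i)} := by
    have h1 := hsep' x hx y hy hxy
    have h2 : 0 < ε * n := by positivity
    exact_mod_cast h2.trans_le h1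
  obtain ⟨i, hi⟩ := Finset.card_pos.1 hpos
  have hi' : 0 < d (x i) (y i) := (Finset.mem_filter.1 hi).2
  -- The two points `x` and `y` alone shatter the singleton `{i}`.
  rw [← Finset.card_singleton i]
  refine le_vcDimQ₀ {i} x y (by simpa using hi') ?_
  intro z hz
  rcases hz i (by simp) with h | h
  · exact ⟨x, hx, by simp [h]⟩
  · exact ⟨y, hy, by simp [h]⟩
end

section
/- There exists an absolute constant c > 0 for which the following holds. Let ε > 0 and let 𝒮 be a system of subsets of {1,…,n} such that each S ∈ 𝒮 contains at least εn elements. Let k ≤ n be an integer such that log|𝒮| ≤ cεk. Then there exists a subset I ⊂ {1,…,n} of cardinality |I| = k such that |I ∩ S| ≥ εk/4 for all S ∈ 𝒮. -/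
/-!
The proof is a greedy (derandomized) version of the first moment argument. Call `S ∈ 𝒮` deficient
for `I` if `|I ∩ S| < εk/4`, and give `I` the potential `∑ 2^(-|I ∩ S|)` over the deficient `S`.
If `|I| < k`, a deficient `S` still has at least `εn - εk/4 ≥ 3εn/4` elements outside `I`, so a
uniformly random new element hits `S` with probability at least `3ε/4`, which halves its term.
Hence some new element multiplies the potential by at most `1 - 3ε/8 ≤ exp (-3ε/8)`
(`exists_insert_potential_le`). After `k` steps the potential is at most
`|𝒮| exp (-3εk/8) ≤ exp (-εk/4)` once `log |𝒮| ≤ εk/8`, whereas a single deficient set would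
contribute more than `2^(-εk/4)`, which is larger since `log 2 < 1`.
-/

/-- The term of `S` in the potential of `I` at threshold `m`: it is `2 ^ (-|I ∩ S|)` if `S` meets
`I` in fewer than `m` points, and `0` otherwise. -/
noncomputable def deficitWeight {n : ℕ} (m : ℝ) (S I : Finset (Fin n)) : ℝ :=
  if ((I ∩ S).card : ℝ) < m then (1 / 2 : ℝ) ^ (I ∩ S).card else 0

lemma deficitWeight_nonneg {n : ℕ} (m : ℝ) (S I : Finset (Fin n)) :
    0 ≤ deficitWeight m S I := by
  unfold deficitWeight
  split_ifs <;> positivity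

lemma deficitWeight_insert_le {n : ℕ} (m : ℝ) (S I : Finset (Fin n)) {x : Fin n} (hx : x ∉ I) :
    deficitWeight m S (insert x I) ≤ deficitWeight m S I * (1 - if x ∈ S then 1 / 2 else 0) := by
  by_cases hS : x ∈ S
  · have hc : (insert x I ∩ S).card = (I ∩ S).card + 1 := by
      rw [Finset.insert_inter_of_mem hS, Finset.card_insert_of_notMem (by simp [hx])]
    unfold deficitWeight
    rw [hc, if_pos hS]
    push_cast
    split_ifs with h1 h2
    · rw [pow_succ]; linarith
    · exact absurd (by linarith) h2
    · positivity
    · simp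
  · unfold deficitWeight
    rw [Finset.insert_inter_of_notMem hS, if_neg hS]
    simp

/-- Averaging over the new element `x ∉ I` contracts the term of a single set `S`. -/
lemma sum_deficitWeight_insert_le {n k : ℕ} {ε : ℝ} (hε : 0 < ε) (hkn : k ≤ n)
    (S I : Finset (Fin n)) (hS : ε * n ≤ (S.card : ℝ)) :
    ∑ x ∈ Iᶜ, deficitWeight (ε * k / 4) S (insert x I) ≤
      (Iᶜ.card : ℝ) * (1 - 3 * ε / 8) * deficitWeight (ε * k / 4) S I := by
  have h1 : ∑ x ∈ Iᶜ, deficitWeight (ε * k / 4) S (insert x I) ≤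
      ∑ x ∈ Iᶜ, deficitWeight (ε * k / 4) S I * (1 - if x ∈ S then 1 / 2 else 0) :=
    Finset.sum_le_sum fun x hx => deficitWeight_insert_le _ S I (Finset.mem_compl.mp hx)
  refine h1.trans ?_
  rw [← Finset.mul_sum, mul_comm]
  by_cases hd : ((I ∩ S).card : ℝ) < ε * k / 4
  · refine mul_le_mul_of_nonneg_right ?_ (deficitWeight_nonneg _ S I)
    rw [Finset.sum_sub_distrib, ← Finset.sum_filter]
    simp only [Finset.sum_const, nsmul_eq_mul, mul_one]
    have hf : Finset.filter (· ∈ S) Iᶜ = S \ I := by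
      ext x; simp [and_comm]
    have hc : ((S \ I).card : ℝ) + (I ∩ S).card = S.card := by
      have := Finset.card_sdiff_add_card_inter S I
      rw [Finset.inter_comm] at this
      exact_mod_cast this
    have hn : (Iᶜ.card : ℝ) ≤ n := by
      exact_mod_cast (Finset.card_le_univ Iᶜ).trans_eq (Fintype.card_fin n)
    have hk : (k : ℝ) ≤ n := by exact_mod_cast hkn
    have h2 := mul_le_mul_of_nonneg_left hn hε.le
    have h3 := mul_le_mul_of_nonneg_left hk hε.le
    rw [hf]
    linarith
  · have h0 : deficitWeight (ε * k / 4) S I = 0 := if_neg hd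
    simp [h0]

lemma exists_insert_potential_le {n k : ℕ} {ε : ℝ} (hε : 0 < ε) (hkn : k ≤ n)
    (𝒮 : Finset (Finset (Fin n))) (h𝒮 : ∀ S ∈ 𝒮, ε * n ≤ (S.card : ℝ))
    (I : Finset (Fin n)) (hI : I.card < n) :
    ∃ x ∉ I, ∑ S ∈ 𝒮, deficitWeight (ε * k / 4) S (insert x I) ≤
      Real.exp (-(3 * ε / 8)) * ∑ S ∈ 𝒮, deficitWeight (ε * k / 4) S I := by
  have hne : Iᶜ.Nonempty := by
    rw [← Finset.card_pos, Finset.card_compl, Fintype.card_fin]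
    omega
  have hsum : ∑ x ∈ Iᶜ, ∑ S ∈ 𝒮, deficitWeight (ε * k / 4) S (insert x I) ≤
      ∑ _x ∈ Iᶜ, (1 - 3 * ε / 8) * ∑ S ∈ 𝒮, deficitWeight (ε * k / 4) S I := by
    rw [Finset.sum_comm, Finset.sum_const, nsmul_eq_mul, ← mul_assoc, Finset.mul_sum]
    exact Finset.sum_le_sum fun S hS => sum_deficitWeight_insert_le hε hkn S I (h𝒮 S hS)
  obtain ⟨x, hx, hle⟩ := Finset.exists_le_of_sum_le hne hsum
  refine ⟨x, Finset.mem_compl.mp hx, hle.trans ?_⟩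
  refine mul_le_mul_of_nonneg_right ?_ (Finset.sum_nonneg fun S _ => deficitWeight_nonneg _ S I)
  linarith [Real.add_one_le_exp (-(3 * ε / 8))]

lemma exists_card_eq_potential_le {n k : ℕ} {ε : ℝ} (hε : 0 < ε) (hkn : k ≤ n)
    (𝒮 : Finset (Finset (Fin n))) (h𝒮 : ∀ S ∈ 𝒮, ε * n ≤ (S.card : ℝ)) (j : ℕ) (hj : j ≤ n) :
    ∃ I : Finset (Fin n), I.card = j ∧ ∑ S ∈ 𝒮, deficitWeight (ε * k / 4) S I ≤
      Real.exp (-(3 * ε / 8) * j) * 𝒮.card := by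
  induction j with
  | zero =>
    refine ⟨∅, rfl, ?_⟩
    have h : ∀ S ∈ 𝒮, deficitWeight (ε * k / 4) S ∅ ≤ 1 := by
      intro S _
      unfold deficitWeight
      split_ifs <;> simp
    simpa using Finset.sum_le_sum h
  | succ j ih =>
    obtain ⟨I, hI, hle⟩ := ih (by omega)
    obtain ⟨x, hx, hxle⟩ := exists_insert_potential_le (k := k) hε hkn 𝒮 h𝒮 I (by omega)
    refine ⟨insert x I, by rw [Finset.card_insert_of_notMem hx, hI], hxle.trans ?_⟩
    refine (mul_le_mul_of_nonneg_left hle (Real.exp_pos _).le).trans_eq ?_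
    rw [← mul_assoc, ← Real.exp_add]
    congr 2
    push_cast
    ring

theorem exists_subset_intersecting_all :
    ∃ c : ℝ, 0 < c ∧
      ∀ (n k : ℕ) (ε : ℝ) (𝒮 : Finset (Finset (Fin n))),
        0 < n → 0 < k → k ≤ n → 0 < ε →
        (∀ S ∈ 𝒮, ε * n ≤ (S.card : ℝ)) →
        Real.log 𝒮.card ≤ c * ε * k →
        ∃ I : Finset (Fin n), I.card = k ∧ ∀ S ∈ 𝒮, ε * k / 4 ≤ ((I ∩ S).card : ℝ) := by
  refine ⟨1 / 8, by norm_num, ?_⟩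
  intro n k ε 𝒮 _ hk hkn hε h𝒮 hlog
  obtain ⟨I, hI, hle⟩ := exists_card_eq_potential_le (k := k) hε hkn 𝒮 h𝒮 k hkn
  refine ⟨I, hI, fun S hS => ?_⟩
  by_contra! hlt
  have hpos : (0 : ℝ) < 𝒮.card := by exact_mod_cast Finset.card_pos.mpr ⟨S, hS⟩
  have hterm : (1 / 2 : ℝ) ^ (I ∩ S).card ≤ ∑ T ∈ 𝒮, deficitWeight (ε * k / 4) T I := by
    have h := Finset.single_le_sum (fun T _ => deficitWeight_nonneg (ε * k / 4) T I) hS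
    rwa [deficitWeight, if_pos hlt] at h
  have h := Real.log_le_log (by positivity) (hterm.trans hle)
  rw [Real.log_mul (Real.exp_pos _).ne' hpos.ne', Real.log_exp, Real.log_pow, one_div,
    Real.log_inv] at h
  have h2 : Real.log 2 ≤ 1 := by linarith [Real.log_two_lt_d9]
  have h3 := mul_le_mul_of_nonneg_left h2 (Nat.cast_nonneg (α := ℝ) (I ∩ S).card)
  linarith
end

section
/- Let n ≥ 2 and p ≥ 2 be integers, let 0 < ε < 1 and q > 0. Let A ⊂ {1,…,p}^n be a set such that for every two distinct points x, y ∈ A one has |x(i) − y(i)| ≥ q for at least εn coordinates i. Then log|A| ≤ C log²(p/ε) · VC(A, q), where C is an absolute constant. -/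
/-!
Write `L = log (p / ε)` and `d = VC(A, q)`.

*Sampling.* A Chernoff bound (`exists_sample`) gives `k` coordinates, with `k` of order
`log |A| / ε`, on which any two points of `A` still differ by at least `q` in an `ε / 4`
proportion of places.

*A separating tree.* By averaging (`exists_split`), every `B ⊆ A` with at least two points has a
sampled coordinate `i` and two values `s`, `t` at distance at least `q`, each taken at `i` by a
proportion at least `δ = ε / (8 p²)` of `B`. The number of configurations (a set `σ` of sampled
coordinates with a pair of `q`-separated values at each) shattered by a set is superadditive under
such a split (`card_shattered_split`), so iterating the split shows that `A` shatters at least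
`|A| ^ α` configurations, where `α = log 2 / log (1 / δ)` is of order `1 / L`
(`rpow_card_le_shattered`).

*Counting.* A shattered configuration has `|σ| ≤ d`, so there are at most `(e k p² / d) ^ d` of
them (`card_shattered_le`, with a suitable weight). Hence `u = log |A| / d` satisfies
`u ≤ C L log (C p² u / ε)`, which forces `u ≤ C' L²` (`le_log_sq`).
-/

/-- The VC dimension `VC(A, q)` of `A ⊆ ℝⁿ` at scale `q` (product/pair version):
the maximal cardinality of a set `σ` of coordinates such that the projection of `A` onto the
coordinates in `σ` contains a product `∏_{i ∈ σ} {a i, b i}` with `|a i − b i| ≥ q`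
for all `i ∈ σ`. -/
noncomputable def vcDimPairs {n : ℕ} (A : Set (Fin n → ℝ)) (q : ℝ) : ℕ :=
  sSup {m : ℕ | ∃ σ : Finset (Fin n), σ.card = m ∧ ∃ a b : Fin n → ℝ,
    (∀ i ∈ σ, q ≤ |a i - b i|) ∧
    ∀ z : Fin n → ℝ, (∀ i ∈ σ, z i = a i ∨ z i = b i) → ∃ k ∈ A, ∀ i ∈ σ, k i = z i}

/-! ### Shattered configurations -/

/-- `ShattersAt R T B c` says that `B` shatters the configuration `c`. The coordinates `i` with
`c i = some (a, b)` form the shattered set `σ ⊆ T`; each pair satisfies `R a b`, and the projection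
of `B` onto `σ` contains the product of the two-point sets `{a, b}`. -/
def ShattersAt {ι V : Type*} (R : V → V → Prop) (T : Finset ι) (B : Finset (ι → V))
    (c : ι → Option (V × V)) : Prop :=
  (∀ i ab, c i = some ab → i ∈ T ∧ R ab.1 ab.2) ∧
    ∀ z : ι → V, (∀ i ab, c i = some ab → z i = ab.1 ∨ z i = ab.2) →
      ∃ x ∈ B, ∀ i, c i ≠ none → x i = z i

open scoped Classical in
/-- The finite set of all configurations on the coordinates `T` shattered by `B`. -/
noncomputable def shatteredConfigs {ι V : Type*} [Fintype ι] [Fintype V] (R : V → V → Prop)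
    (T : Finset ι) (B : Finset (ι → V)) : Finset (ι → Option (V × V)) :=
  Finset.univ.filter (ShattersAt R T B)

section Combinatorics

variable {ι V : Type*} {R : V → V → Prop} {T : Finset ι}

lemma ShattersAt.mono {B B' : Finset (ι → V)} (h : B ⊆ B') {c : ι → Option (V × V)}
    (hc : ShattersAt R T B c) : ShattersAt R T B' c := by
  refine ⟨hc.1, fun z hz => ?_⟩
  obtain ⟨x, hx, hxz⟩ := hc.2 z hz
  exact ⟨x, h hx, hxz⟩

/-- A set on which the coordinate `i` is constant shatters nothing at `i`. -/
lemma ShattersAt.eq_none (hR : ∀ s, ¬ R s s) {B : Finset (ι → V)} {c : ι → Option (V × V)}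
    (hc : ShattersAt R T B c) {i : ι} {s : V} (hB : ∀ x ∈ B, x i = s) : c i = none := by
  by_contra hne
  obtain ⟨ab, hab⟩ := Option.ne_none_iff_exists'.1 hne
  obtain ⟨x, hx, hxz⟩ := hc.2 (fun j => (c j).elim s Prod.fst)
    (fun j ab' h => by simp [h])
  obtain ⟨y, hy, hyz⟩ := hc.2 (fun j => (c j).elim s Prod.snd)
    (fun j ab' h => by simp [h])
  have h1 := hxz i hne
  have h2 := hyz i hne
  rw [hB x hx] at h1
  rw [hB y hy] at h2
  simp only [hab, Option.elim_some] at h1 h2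
  have := (hc.1 i ab hab).2
  rw [← h1, ← h2] at this
  exact hR s this

open scoped Classical in
/-- The number of shattered configurations is superadditive under splitting along a coordinate:
a configuration shattered by both parts gives a further one, with the pair `(s, t)` added at `i`. -/
lemma card_shattered_split [Fintype ι] [Fintype V] (hR : ∀ s, ¬ R s s) (B : Finset (ι → V))
    {i : ι} (hi : i ∈ T) {s t : V} (hst : R s t) :
    (shatteredConfigs R T (B.filter (fun x => x i = s))).card +
      (shatteredConfigs R T (B.filter (fun x => x i = t))).card ≤
      (shatteredConfigs R T B).card := by
  set F₁ := shatteredConfigs R T (B.filter (fun x => x i = s)) with hF₁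
  set F₂ := shatteredConfigs R T (B.filter (fun x => x i = t)) with hF₂
  have n1 : ∀ c ∈ F₁, c i = none := fun c hc =>
    ShattersAt.eq_none (s := s) hR (Finset.mem_filter.1 hc).2
      (fun x hx => (Finset.mem_filter.1 hx).2)
  have n2 : ∀ c ∈ F₂, c i = none := fun c hc =>
    ShattersAt.eq_none (s := t) hR (Finset.mem_filter.1 hc).2
      (fun x hx => (Finset.mem_filter.1 hx).2)
  set φ : (ι → Option (V × V)) → (ι → Option (V × V)) :=
    fun c => Function.update c i (some (s, t)) with hφ
  have hinj : Set.InjOn φ (F₁ ∩ F₂ : Finset _) := by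
    intro c hc c' hc' h
    have hc := n1 c (Finset.mem_inter.1 hc).1
    have hc' := n1 c' (Finset.mem_inter.1 hc').1
    funext j
    by_cases hj : j = i
    · rw [hj, hc, hc']
    · simpa [hφ, hj] using congrFun h j
  have hdisj : Disjoint (F₁ ∪ F₂) ((F₁ ∩ F₂).image φ) := by
    rw [Finset.disjoint_left]
    intro c hc hc'
    obtain ⟨c₀, -, rfl⟩ := Finset.mem_image.1 hc'
    have : φ c₀ i = none := (Finset.mem_union.1 hc).elim (n1 _) (n2 _)
    simp [hφ] at this
  have hsub : (F₁ ∪ F₂) ∪ ((F₁ ∩ F₂).image φ) ⊆ shatteredConfigs R T B := by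
    intro c hc
    refine Finset.mem_filter.2 ⟨Finset.mem_univ _, ?_⟩
    rcases Finset.mem_union.1 hc with hc | hc
    · rcases Finset.mem_union.1 hc with hc | hc
      · exact (Finset.mem_filter.1 hc).2.mono (Finset.filter_subset _ _)
      · exact (Finset.mem_filter.1 hc).2.mono (Finset.filter_subset _ _)
    · obtain ⟨c, hc', rfl⟩ := Finset.mem_image.1 hc
      obtain ⟨hc1, hc2⟩ := Finset.mem_inter.1 hc'
      have hn := n1 c hc1
      have s1 := (Finset.mem_filter.1 hc1).2
      have s2 := (Finset.mem_filter.1 hc2).2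
      refine ⟨fun j ab hj => ?_, fun z hz => ?_⟩
      · by_cases hji : j = i
        · subst hji
          simp only [hφ, Function.update_self, Option.some.injEq] at hj
          subst hj
          exact ⟨hi, hst⟩
        · simp only [hφ, Function.update_of_ne hji] at hj
          exact s1.1 j ab hj
      · have hz' : ∀ j ab, c j = some ab → z j = ab.1 ∨ z j = ab.2 := by
          intro j ab hj
          have hji : j ≠ i := by
            rintro rfl
            simp [hn] at hj
          exact hz j ab (by simpa [hφ, hji] using hj)
        have key : ∀ v, z i = v → ShattersAt R T (B.filter (fun x => x i = v)) c →
            ∃ x ∈ B, ∀ j, φ c j ≠ none → x j = z j := by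
          intro v hv hs
          obtain ⟨x, hx, hxz⟩ := hs.2 z hz'
          obtain ⟨hxB, hxi⟩ := Finset.mem_filter.1 hx
          refine ⟨x, hxB, fun j hj => ?_⟩
          by_cases hji : j = i
          · rw [hji, hxi, hv]
          · exact hxz j (by simpa [hφ, hji] using hj)
        rcases hz i (s, t) (by simp [hφ]) with h | h
        · exact key s h s1
        · exact key t h s2
  calc F₁.card + F₂.card = (F₁ ∪ F₂).card + (F₁ ∩ F₂).card :=
        (Finset.card_union_add_card_inter _ _).symm
    _ = (F₁ ∪ F₂).card + ((F₁ ∩ F₂).image φ).card := by rw [Finset.card_image_of_injOn hinj]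
    _ = ((F₁ ∪ F₂) ∪ ((F₁ ∩ F₂).image φ)).card := (Finset.card_union_of_disjoint hdisj).symm
    _ ≤ _ := Finset.card_le_card hsub

/-! ### The separating tree -/

open scoped Classical in
/-- If every subset of `A` with at least two points splits along some coordinate into two parts of
proportion at least `δ`, then `B ⊆ A` shatters at least `|B| ^ α` configurations, where
`2 δ ^ α = 1`. -/
lemma rpow_card_le_shattered [Fintype ι] [Fintype V] (hR : ∀ s, ¬ R s s) {A : Finset (ι → V)}
    {δ α : ℝ} (hδ : 0 < δ) (hα : 0 < α) (hδα : 2 * δ ^ α = 1)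
    (H : ∀ B ⊆ A, 2 ≤ B.card → ∃ i ∈ T, ∃ s t, R s t ∧
      δ * B.card ≤ (B.filter (fun x => x i = s)).card ∧
      δ * B.card ≤ (B.filter (fun x => x i = t)).card) :
    ∀ m : ℕ, ∀ B ⊆ A, B.card = m → B.Nonempty →
      (B.card : ℝ) ^ α ≤ (shatteredConfigs R T B).card := by
  intro m
  induction m using Nat.strong_induction_on with
  | _ m ih =>
  intro B hBA hBm hB
  by_cases h2 : 2 ≤ B.card
  · obtain ⟨i, hi, s, t, hst, hs, ht⟩ := H B hBA h2
    have hne : s ≠ t := by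
      rintro rfl
      exact hR _ hst
    have hpos : 0 < δ * B.card := by
      have : (0 : ℝ) < B.card := by exact_mod_cast hB.card_pos
      positivity
    have hBs : (B.filter (fun x => x i = s)).Nonempty := by
      rw [← Finset.card_pos]
      exact_mod_cast hpos.trans_le hs
    have hBt : (B.filter (fun x => x i = t)).Nonempty := by
      rw [← Finset.card_pos]
      exact_mod_cast hpos.trans_le ht
    have lt1 : (B.filter (fun x => x i = s)).card < m := by
      rw [← hBm]
      obtain ⟨x, hx⟩ := hBt
      refine Finset.card_lt_card (Finset.filter_ssubset.2 ⟨x, (Finset.mem_filter.1 hx).1, ?_⟩)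
      rw [(Finset.mem_filter.1 hx).2]
      exact hne.symm
    have lt2 : (B.filter (fun x => x i = t)).card < m := by
      rw [← hBm]
      obtain ⟨x, hx⟩ := hBs
      refine Finset.card_lt_card (Finset.filter_ssubset.2 ⟨x, (Finset.mem_filter.1 hx).1, ?_⟩)
      rw [(Finset.mem_filter.1 hx).2]
      exact hne
    have i1 := ih _ lt1 _ ((Finset.filter_subset _ _).trans hBA) rfl hBs
    have i2 := ih _ lt2 _ ((Finset.filter_subset _ _).trans hBA) rfl hBt
    have j1 := (Real.rpow_le_rpow hpos.le hs hα.le).trans i1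
    have j2 := (Real.rpow_le_rpow hpos.le ht hα.le).trans i2
    have hsplit := card_shattered_split (T := T) hR B hi hst
    have hsplit' : ((shatteredConfigs R T (B.filter (fun x => x i = s))).card : ℝ) +
      (shatteredConfigs R T (B.filter (fun x => x i = t))).card ≤
      (shatteredConfigs R T B).card := by exact_mod_cast hsplit
    have : (B.card : ℝ) ^ α = 2 * (δ * B.card) ^ α := by
      rw [Real.mul_rpow hδ.le (Nat.cast_nonneg _), ← mul_assoc, hδα, one_mul]
    linarith
  · have h1 : B.card = 1 := by
      have := hB.card_pos
      omega
    have : (shatteredConfigs R T B).Nonempty := by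
      obtain ⟨x, hx⟩ := hB
      exact ⟨fun _ => none, Finset.mem_filter.2 ⟨Finset.mem_univ _, by simp, fun z _ =>
        ⟨x, hx, by simp⟩⟩⟩
    rw [h1]
    simpa using this.card_pos

open scoped Classical in
/-- A separated set splits: averaging the separated pairs over the sampled coordinates `f j` and
over the pairs of values gives one coordinate and two `R`-related values, each taken by a
proportion at least `η / (2 |V| ^ 2)` of the points. -/
lemma exists_split [Fintype V] {A B : Finset (ι → V)} {k : ℕ} {f : Fin k → ι} {η : ℝ}
    (hη : 0 < η) (hk : 0 < k)
    (hsep : ∀ x ∈ A, ∀ y ∈ A, x ≠ y →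
      η * k ≤ (Finset.univ.filter (fun j => R (x (f j)) (y (f j)))).card)
    (hBA : B ⊆ A) (hB : 2 ≤ B.card) :
    ∃ i ∈ Finset.univ.image f, ∃ s t, R s t ∧
      η / (2 * (Fintype.card V : ℝ) ^ 2) * B.card ≤ (B.filter (fun x => x i = s)).card ∧
      η / (2 * (Fintype.card V : ℝ) ^ 2) * B.card ≤ (B.filter (fun x => x i = t)).card := by
  by_contra hcon
  have hB0 : (2 : ℝ) ≤ B.card := by exact_mod_cast hB
  have hV : Nonempty V := by
    obtain ⟨x, hx⟩ : B.Nonempty := Finset.card_pos.1 (by omega)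
    exact ⟨x (f ⟨0, hk⟩)⟩
  have hP : (0 : ℝ) < Fintype.card V := by exact_mod_cast Fintype.card_pos
  set δ := η / (2 * (Fintype.card V : ℝ) ^ 2) with hδ
  have hδ0 : 0 < δ := by positivity
  have hsmall : ∀ j s t, R s t → ((B.filter (fun x => x (f j) = s)).card : ℝ) *
      (B.filter (fun x => x (f j) = t)).card < δ * (B.card : ℝ) ^ 2 := by
    intro j s t hst
    have le1 : ((B.filter (fun x => x (f j) = s)).card : ℝ) ≤ B.card := by
      exact_mod_cast Finset.card_filter_le _ _
    have le2 : ((B.filter (fun x => x (f j) = t)).card : ℝ) ≤ B.card := by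
      exact_mod_cast Finset.card_filter_le _ _
    by_contra hge
    push Not at hge
    refine hcon ⟨f j, by simp, s, t, hst, ?_, ?_⟩
    · by_contra hlt
      push Not at hlt
      have : ((B.filter (fun x => x (f j) = s)).card : ℝ) *
        (B.filter (fun x => x (f j) = t)).card ≤
        ((B.filter (fun x => x (f j) = s)).card : ℝ) * B.card := by gcongr
      nlinarith
    · by_contra hlt
      push Not at hlt
      have : ((B.filter (fun x => x (f j) = s)).card : ℝ) *
        (B.filter (fun x => x (f j) = t)).card ≤
        (B.card : ℝ) * (B.filter (fun x => x (f j) = t)).card := by gcongr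
      nlinarith
  have hcoord : ∀ j, (((B ×ˢ B).filter (fun w => R (w.1 (f j)) (w.2 (f j)))).card : ℝ) <
      η / 2 * (B.card : ℝ) ^ 2 := by
    intro j
    have h1 := Finset.card_eq_sum_card_fiberwise
      (s := (B ×ˢ B).filter (fun w => R (w.1 (f j)) (w.2 (f j))))
      (f := fun w => (w.1 (f j), w.2 (f j))) (t := (Finset.univ : Finset (V × V)))
      (fun _ _ => by simp)
    rw [h1]
    push_cast
    calc _ < ∑ _b : V × V, δ * (B.card : ℝ) ^ 2 := by
          refine Finset.sum_lt_sum_of_nonempty Finset.univ_nonempty ?_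
          rintro ⟨s, t⟩ -
          by_cases hst : R s t
          · refine lt_of_le_of_lt ?_ (hsmall j s t hst)
            rw [← Nat.cast_mul, ← Finset.card_product]
            norm_cast
            apply Finset.card_le_card
            rintro ⟨x, y⟩ hxy
            simp only [Finset.mem_filter, Finset.mem_product, Prod.mk.injEq] at hxy ⊢
            exact ⟨⟨hxy.1.1.1, hxy.2.1⟩, hxy.1.1.2, hxy.2.2⟩
          · rw [Finset.filter_false_of_mem]
            · simp only [Finset.card_empty, Nat.cast_zero]
              positivity
            · rintro ⟨x, y⟩ hxy h
              simp only [Finset.mem_filter, Finset.mem_product, Prod.mk.injEq] at hxy h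
              rw [h.1, h.2] at hxy
              exact hst hxy.2
      _ = η / 2 * (B.card : ℝ) ^ 2 := by
          simp only [Finset.sum_const, Finset.card_univ, Fintype.card_prod, nsmul_eq_mul]
          push_cast
          rw [hδ]
          field_simp
  have hupper : ∑ j, (((B ×ˢ B).filter (fun w => R (w.1 (f j)) (w.2 (f j)))).card : ℝ) <
      k * (η / 2 * (B.card : ℝ) ^ 2) := by
    have : Nonempty (Fin k) := ⟨⟨0, hk⟩⟩
    calc _ < ∑ _j : Fin k, (η / 2 * (B.card : ℝ) ^ 2) :=
          Finset.sum_lt_sum_of_nonempty Finset.univ_nonempty (fun j _ => hcoord j)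
      _ = _ := by simp
  have hswap : ∑ j, (((B ×ˢ B).filter (fun w => R (w.1 (f j)) (w.2 (f j)))).card : ℝ) =
      ∑ w ∈ B ×ˢ B, ((Finset.univ.filter (fun j => R (w.1 (f j)) (w.2 (f j)))).card : ℝ) := by
    norm_cast
    exact (Finset.sum_card_bipartiteAbove_eq_sum_card_bipartiteBelow
      (s := (Finset.univ : Finset (Fin k))) (t := B ×ˢ B)
      (fun j w => R (w.1 (f j)) (w.2 (f j))))
  have hlower : ((B.card : ℝ) ^ 2 - B.card) * (η * k) ≤
      ∑ w ∈ B ×ˢ B, ((Finset.univ.filter (fun j => R (w.1 (f j)) (w.2 (f j)))).card : ℝ) := by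
    calc _ = ∑ _w ∈ B.offDiag, (η * k) := by
          rw [Finset.sum_const, Finset.offDiag_card, nsmul_eq_mul, Nat.cast_sub (by nlinarith)]
          push_cast
          ring
      _ ≤ ∑ w ∈ B.offDiag,
            ((Finset.univ.filter (fun j => R (w.1 (f j)) (w.2 (f j)))).card : ℝ) := by
          refine Finset.sum_le_sum fun w hw => ?_
          obtain ⟨h1, h2, h3⟩ := Finset.mem_offDiag.1 hw
          exact hsep _ (hBA h1) _ (hBA h2) h3
      _ ≤ _ := by
          refine Finset.sum_le_sum_of_subset_of_nonneg ?_ (fun _ _ _ => by positivity)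
          intro w hw
          obtain ⟨h1, h2, h3⟩ := Finset.mem_offDiag.1 hw
          exact Finset.mem_product.2 ⟨h1, h2⟩
  have hk' : (0 : ℝ) < k := by exact_mod_cast hk
  have hhalf : (B.card : ℝ) ^ 2 / 2 ≤ (B.card : ℝ) ^ 2 - B.card := by nlinarith
  have := mul_le_mul_of_nonneg_right hhalf (by positivity : 0 ≤ η * k)
  nlinarith

/-! ### Sampling coordinates -/

open scoped Classical in
/-- Random sampling of coordinates with replacement, by a Chernoff bound: if each of the sets
`D w`, `w ∈ Q`, has density at least `ε` in `ι` and `|Q| < exp (ε k / 4)`, then some `k` sampled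
coordinates hit every `D w` at least `ε k / 4` times. -/
lemma exists_sample_s6 [Fintype ι] [Nonempty ι] {κ : Type*} (Q : Finset κ) (D : κ → Finset ι)
    {ε : ℝ} (hD : ∀ w ∈ Q, ε * Fintype.card ι ≤ (D w).card) (k : ℕ)
    (hk : (Q.card : ℝ) < Real.exp (ε * k / 4)) :
    ∃ f : Fin k → ι, ∀ w ∈ Q,
      ε / 4 * k ≤ (Finset.univ.filter (fun j => f j ∈ D w)).card := by
  by_contra hcon
  push Not at hcon
  set n : ℝ := (Fintype.card ι : ℝ) with hn
  have hn0 : 0 < n := by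
    rw [hn]
    exact_mod_cast Fintype.card_pos
  set g : κ → ι → ℝ := fun w i => if i ∈ D w then Real.exp (-1) else 1 with hg
  have hg0 : ∀ w i, 0 ≤ g w i := by
    intro w i
    simp only [hg]
    split_ifs <;> positivity
  have he : Real.exp (-1) ≤ 1 / 2 := by
    rw [Real.exp_neg, inv_eq_one_div]
    have := Real.add_one_le_exp 1
    exact one_div_le_one_div_of_le (by norm_num) (by linarith)
  have hprod : ∀ (f : Fin k → ι) w, ∏ j, g w (f j) =
      Real.exp (-((Finset.univ.filter (fun j => f j ∈ D w)).card : ℝ)) := by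
    intro f w
    simp only [hg]
    rw [Finset.prod_ite]
    simp only [Finset.prod_const, one_pow, mul_one]
    rw [← Real.exp_nat_mul]
    congr 1
    ring
  have hsum : ∀ w ∈ Q, ∑ f : Fin k → ι, ∏ j, g w (f j) ≤ n ^ k * Real.exp (-(ε * k / 2)) := by
    intro w hw
    have h1 : ∑ f : Fin k → ι, ∏ j, g w (f j) = (∑ i, g w i) ^ k := by
      rw [Fintype.sum_pow]
    have h2 : ∑ i, g w i ≤ n * Real.exp (-(ε / 2)) := by
      have h3 : ∑ i, g w i ≤ ∑ i, (1 - (if i ∈ D w then (1 / 2 : ℝ) else 0)) := by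
        refine Finset.sum_le_sum fun i _ => ?_
        simp only [hg]
        split_ifs <;> linarith
      have h4 : ∑ i, (1 - (if i ∈ D w then (1 / 2 : ℝ) else 0)) = n - (D w).card / 2 := by
        rw [Finset.sum_sub_distrib]
        simp [hn]
        ring
      have h5 := Real.add_one_le_exp (-(ε / 2))
      have h6 := hD w hw
      nlinarith
    rw [h1]
    calc (∑ i, g w i) ^ k ≤ (n * Real.exp (-(ε / 2))) ^ k :=
          pow_le_pow_left₀ (Finset.sum_nonneg fun i _ => hg0 w i) h2 k
      _ = _ := by
          rw [mul_pow, ← Real.exp_nat_mul]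
          congr 2
          ring
  -- Each `f` misses some `w`, so its total weight, rescaled by `exp (ε k / 4)`, is at least `1`.
  have hone : ∀ f : Fin k → ι, 1 ≤ ∑ w ∈ Q, Real.exp (ε * k / 4) * ∏ j, g w (f j) := by
    intro f
    obtain ⟨w, hw, hlt⟩ := hcon f
    refine le_trans ?_ (Finset.single_le_sum (f := fun w => Real.exp (ε * k / 4) *
      ∏ j, g w (f j)) (fun w _ => by
        have := Finset.prod_nonneg (fun j (_ : j ∈ Finset.univ) => hg0 w (f j))
        positivity) hw)
    rw [hprod, ← Real.exp_add]
    apply Real.one_le_exp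
    linarith
  have htot : n ^ k ≤ Q.card * (n ^ k * Real.exp (-(ε * k / 4))) := by
    calc n ^ k = ∑ _f : Fin k → ι, (1 : ℝ) := by simp [hn]
      _ ≤ ∑ f : Fin k → ι, ∑ w ∈ Q, Real.exp (ε * k / 4) * ∏ j, g w (f j) :=
          Finset.sum_le_sum fun f _ => hone f
      _ = ∑ w ∈ Q, Real.exp (ε * k / 4) * ∑ f : Fin k → ι, ∏ j, g w (f j) := by
          rw [Finset.sum_comm]
          simp_rw [Finset.mul_sum]
      _ ≤ ∑ _w ∈ Q, (n ^ k * Real.exp (-(ε * k / 4))) := by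
          refine Finset.sum_le_sum fun w hw => ?_
          calc _ ≤ Real.exp (ε * k / 4) * (n ^ k * Real.exp (-(ε * k / 2))) := by
                gcongr
                exact hsum w hw
            _ = n ^ k * (Real.exp (ε * k / 4) * Real.exp (-(ε * k / 2))) := by ring
            _ = _ := by
                rw [← Real.exp_add]
                congr 2
                ring
      _ = _ := by simp
  have hnk : 0 < n ^ k := by positivity
  have : (Q.card : ℝ) * Real.exp (-(ε * k / 4)) < 1 := by
    rw [Real.exp_neg, ← div_eq_mul_inv, div_lt_one (Real.exp_pos _)]
    exact hk
  nlinarith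

/-! ### Counting configurations -/

open scoped Classical in
/-- If every shattered configuration has at most `d` pairs, then giving weight `θ` to each
pair bounds the number of them by `θ⁻ᵈ (1 + θ |V| ^ 2) ^ |T|`. -/
lemma card_shattered_le [Fintype ι] [Fintype V] {B : Finset (ι → V)} {d : ℕ}
    (hd : ∀ c, ShattersAt R T B c → (Finset.univ.filter (fun i => c i ≠ none)).card ≤ d)
    {θ : ℝ} (h0 : 0 < θ) (h1 : θ ≤ 1) :
    θ ^ d * (shatteredConfigs R T B).card ≤
      (1 + θ * (Fintype.card V : ℝ) ^ 2) ^ T.card := by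
  set w : Option (V × V) → ℝ := fun o => if o ≠ none then θ else 1 with hw
  set X : ι → Finset (Option (V × V)) := fun i => if i ∈ T then Finset.univ else {none} with hX
  have hsub : shatteredConfigs R T B ⊆ Fintype.piFinset X := by
    intro c hc
    rw [Fintype.mem_piFinset]
    intro i
    by_cases hi : i ∈ T
    · simp [hX, hi]
    · simp only [hX, hi, if_false, Finset.mem_singleton]
      by_contra hne
      obtain ⟨ab, hab⟩ := Option.ne_none_iff_exists'.1 hne
      exact hi ((Finset.mem_filter.1 hc).2.1 i ab hab).1
  have hw0 : ∀ o, 0 ≤ w o := by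
    intro o
    simp only [hw]
    split_ifs <;> positivity
  calc θ ^ d * (shatteredConfigs R T B).card = ∑ _c ∈ shatteredConfigs R T B, θ ^ d := by
        simp [mul_comm]
    _ ≤ ∑ c ∈ shatteredConfigs R T B, ∏ i, w (c i) := by
        refine Finset.sum_le_sum fun c hc => ?_
        simp only [hw]
        rw [Finset.prod_ite]
        simp only [Finset.prod_const, one_pow, mul_one]
        exact pow_le_pow_of_le_one h0.le h1 (hd c (Finset.mem_filter.1 hc).2)
    _ ≤ ∑ c ∈ Fintype.piFinset X, ∏ i, w (c i) :=
        Finset.sum_le_sum_of_subset_of_nonneg hsub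
          (fun c _ _ => Finset.prod_nonneg fun i _ => hw0 _)
    _ = ∏ i, ∑ o ∈ X i, w o := (Finset.prod_univ_sum X (fun _ o => w o)).symm
    _ = ∏ i, (if i ∈ T then (1 + θ * (Fintype.card V : ℝ) ^ 2) else 1) := by
        refine Finset.prod_congr rfl fun i _ => ?_
        by_cases hi : i ∈ T
        · simp only [hX, hi, if_true]
          rw [Fintype.sum_option]
          simp [hw]
          ring
        · simp [hX, hi, hw]
    _ = _ := by
        rw [Finset.prod_ite]
        simp

end Combinatorics

/-! ### Assembling the estimates -/

/-- Solving the inequality `u ≤ C L log (C p² u / ε)` for `u = ℓ / d`, where `L = log (p / ε)`: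
the logarithm of `u` on the right is absorbed into the left-hand side. -/
lemma le_log_sq {p ε ℓ d k : ℝ} (hp : 2 ≤ p) (hε : 0 < ε) (hε1 : ε < 1) (hd : 1 ≤ d)
    (hdl : d ≤ ℓ) (hk0 : 0 < k) (hk : k ≤ 10 * ℓ / ε)
    (h : Real.log 2 / Real.log (8 * p ^ 2 / ε) * ℓ ≤ d * Real.log (k * p ^ 2 / d) + d) :
    ℓ ≤ 192 * Real.log (p / ε) ^ 2 * d := by
  have hd0 : 0 < d := by linarith
  have hp0 : 0 < p := by linarith
  have hl2 := Real.log_two_gt_d9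
  set L := Real.log (p / ε) with hL
  have hpe : 2 ≤ p / ε := by
    rw [le_div_iff₀ hε]
    nlinarith
  have hL2 : Real.log 2 ≤ L := Real.log_le_log (by norm_num) hpe
  have hLp : Real.log p ≤ L := Real.log_le_log hp0 (by rw [le_div_iff₀ hε]; nlinarith)
  have hLdef : L = Real.log p - Real.log ε := Real.log_div hp0.ne' hε.ne'
  set u := ℓ / d with hu
  have hu1 : 1 ≤ u := by rwa [hu, one_le_div hd0]
  have hl8 : Real.log 8 = 3 * Real.log 2 := by
    rw [show (8 : ℝ) = 2 ^ 3 by norm_num, Real.log_pow]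
    norm_num
  have hl16 : Real.log 16 = 4 * Real.log 2 := by
    rw [show (16 : ℝ) = 2 ^ 4 by norm_num, Real.log_pow]
    norm_num
  have hden : Real.log (8 * p ^ 2 / ε) ≤ 5 * L := by
    rw [Real.log_div (by positivity) hε.ne', Real.log_mul (by norm_num) (by positivity),
      Real.log_pow, hl8]
    push_cast
    linarith
  have hden0 : 0 < Real.log (8 * p ^ 2 / ε) := by
    rw [Real.log_div (by positivity) hε.ne', Real.log_mul (by norm_num) (by positivity),
      Real.log_pow, hl8]
    push_cast
    have : 0 < Real.log p := Real.log_pos (by linarith)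
    have : Real.log ε < 0 := Real.log_neg hε hε1
    linarith
  have hlog : Real.log (k * p ^ 2 / d) ≤ 6 * L + Real.log u := by
    have h1 : k * p ^ 2 / d ≤ 16 * p ^ 2 * u / ε := by
      calc k * p ^ 2 / d ≤ (10 * ℓ / ε) * p ^ 2 / d := by gcongr
        _ = 10 * (p ^ 2 * u / ε) := by rw [hu]; field_simp
        _ ≤ 16 * (p ^ 2 * u / ε) := by
          have : 0 < p ^ 2 * u / ε := by positivity
          linarith
        _ = _ := by ring
    have h2 := Real.log_le_log (by positivity) h1
    rw [Real.log_div (by positivity) hε.ne', Real.log_mul (by positivity) (by positivity),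
      Real.log_mul (by norm_num) (by positivity), Real.log_pow, hl16] at h2
    push_cast at h2
    linarith
  have hL0 : 0 < L := by linarith
  have hul : Real.log u ≤ u / (16 * L) - 1 + 5 * L := by
    have h1 := Real.log_le_sub_one_of_pos (show 0 < u / (16 * L) by positivity)
    rw [Real.log_div (by positivity) (by positivity), Real.log_mul (by norm_num) hL0.ne',
      hl16] at h1
    have h2 := Real.log_le_sub_one_of_pos hL0
    linarith
  have hmain : u ≤ 8 * L * (11 * L + u / (16 * L)) := by
    have h1 : Real.log 2 / Real.log (8 * p ^ 2 / ε) * u ≤ 6 * L + Real.log u + 1 := by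
      have : Real.log 2 / Real.log (8 * p ^ 2 / ε) * u * d ≤
          (Real.log (k * p ^ 2 / d) + 1) * d := by
        rw [mul_assoc, hu, div_mul_cancel₀ _ hd0.ne']
        linarith
      have := le_of_mul_le_mul_right this hd0
      linarith
    have h2 : 1 / (8 * L) ≤ Real.log 2 / Real.log (8 * p ^ 2 / ε) := by
      rw [div_le_div_iff₀ (by positivity) hden0]
      nlinarith
    have h3 : 1 / (8 * L) * u ≤ 11 * L + u / (16 * L) := by
      have := mul_le_mul_of_nonneg_right h2 (by linarith : 0 ≤ u)
      linarith
    have h4 := mul_le_mul_of_nonneg_left h3 (by positivity : 0 ≤ 8 * L)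
    rwa [← mul_assoc, mul_one_div_cancel (by positivity), one_mul] at h4
  have h5 : 8 * L * (11 * L + u / (16 * L)) = 88 * L ^ 2 + u / 2 := by
    field_simp
    ring
  have h6 : u ≤ 192 * L ^ 2 := by nlinarith
  rwa [hu, div_le_iff₀ hd0] at h6

open scoped Classical in
/-- The combinatorial form of the entropy bound, for an arbitrary alphabet `V` and an irreflexive
relation `R` in place of `|s - t| ≥ q`. -/
lemma log_card_le_of_shattered {ι V : Type*} [Fintype ι] [Nonempty ι] [Fintype V]
    {R : V → V → Prop} (hR : ∀ s, ¬ R s s) (hV : 2 ≤ Fintype.card V) {ε : ℝ} (hε : 0 < ε)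
    (hε1 : ε < 1) (A : Finset (ι → V)) (hA : 2 ≤ A.card)
    (hsep : ∀ x ∈ A, ∀ y ∈ A, x ≠ y →
      ε * Fintype.card ι ≤ (Finset.univ.filter (fun i => R (x i) (y i))).card)
    (d : ℕ) (hd : ∀ T c, ShattersAt R T A c →
      (Finset.univ.filter (fun i => c i ≠ none)).card ≤ d) :
    Real.log A.card ≤ 192 * Real.log (Fintype.card V / ε) ^ 2 * d := by
  have hm : (2 : ℝ) ≤ A.card := by exact_mod_cast hA
  set ℓ := Real.log A.card with hℓ
  have hℓ2 : Real.log 2 ≤ ℓ := Real.log_le_log (by norm_num) hm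
  have hl2 := Real.log_two_gt_d9
  set p : ℝ := (Fintype.card V : ℝ) with hp
  have hp2 : 2 ≤ p := by
    rw [hp]
    exact_mod_cast hV
  set k := ⌈8 * ℓ / ε⌉₊ with hk
  have hk8 : 8 * ℓ / ε ≤ k := Nat.le_ceil _
  have hpos : 0 < 8 * ℓ / ε := div_pos (by linarith) hε
  have hk0 : 0 < k := Nat.ceil_pos.2 hpos
  have hk10 : (k : ℝ) ≤ 10 * ℓ / ε := by
    have h1 := (Nat.ceil_lt_add_one hpos.le).le
    have h2 : 1 ≤ 2 * ℓ / ε := by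
      rw [le_div_iff₀ hε]
      linarith
    have h3 : 10 * ℓ / ε = 8 * ℓ / ε + 2 * ℓ / ε := by ring
    linarith
  obtain ⟨f, hf⟩ := exists_sample_s6 A.offDiag
    (fun w => Finset.univ.filter (fun i => R (w.1 i) (w.2 i))) (ε := ε)
    (fun w hw => by
      obtain ⟨h1, h2, h3⟩ := Finset.mem_offDiag.1 hw
      exact hsep _ h1 _ h2 h3) k (by
      have h1 : (A.card : ℝ) ^ 2 ≤ Real.exp (ε * k / 4) := by
        rw [div_le_iff₀ hε] at hk8
        calc (A.card : ℝ) ^ 2 = Real.exp (2 * ℓ) := by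
              rw [two_mul, Real.exp_add, hℓ, Real.exp_log (by linarith)]
              ring
          _ ≤ _ := Real.exp_le_exp.2 (by linarith)
      refine lt_of_lt_of_le ?_ h1
      rw [Finset.offDiag_card, Nat.cast_sub (by nlinarith)]
      push_cast
      nlinarith)
  set T := Finset.univ.image f with hT
  have hTk : T.card ≤ k := by
    simpa using (Finset.card_image_le (s := Finset.univ) (f := f))
  have hsep' : ∀ x ∈ A, ∀ y ∈ A, x ≠ y →
      ε / 4 * k ≤ (Finset.univ.filter (fun j => R (x (f j)) (y (f j)))).card := by
    intro x hx y hy hxy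
    simpa using hf (x, y) (Finset.mem_offDiag.2 ⟨hx, hy, hxy⟩)
  set δ := ε / 4 / (2 * p ^ 2) with hδ
  have hδ0 : 0 < δ := by positivity
  have hδinv : 8 * p ^ 2 / ε = δ⁻¹ := by
    rw [hδ]
    field_simp
    norm_num
  have hlogδ : 0 < Real.log (8 * p ^ 2 / ε) := by
    apply Real.log_pos
    rw [lt_div_iff₀ hε]
    nlinarith
  set α := Real.log 2 / Real.log (8 * p ^ 2 / ε) with hα
  have hα0 : 0 < α := div_pos (by linarith) hlogδ
  have hδα : 2 * δ ^ α = 1 := by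
    have : Real.log δ = -Real.log (8 * p ^ 2 / ε) := by rw [hδinv, Real.log_inv, neg_neg]
    rw [Real.rpow_def_of_pos hδ0, this, hα, neg_mul, mul_div_cancel₀ _ hlogδ.ne', Real.exp_neg,
      Real.exp_log (by norm_num)]
    norm_num
  have hcount := rpow_card_le_shattered (T := T) hR hδ0 hα0 hδα
    (fun B hBA hB => exists_split (by positivity) hk0 hsep' hBA hB) A.card A subset_rfl rfl
    (Finset.card_pos.1 (by omega))
  have hgt : 1 < (shatteredConfigs R T A).card := by
    have : (1 : ℝ) < (A.card : ℝ) ^ α := Real.one_lt_rpow (by linarith) hα0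
    exact_mod_cast this.trans_le hcount
  have hd1 : 1 ≤ d := by
    obtain ⟨c, hc, hcn⟩ := Finset.exists_mem_ne hgt (fun _ => none)
    obtain ⟨i, hi⟩ := Function.ne_iff.1 hcn
    refine le_trans ?_ (hd T c (Finset.mem_filter.1 hc).2)
    exact Finset.card_pos.2 ⟨i, by simpa using hi⟩
  have hd1' : (1 : ℝ) ≤ d := by exact_mod_cast hd1
  have hL2 : Real.log 2 ≤ Real.log (p / ε) := by
    refine Real.log_le_log (by norm_num) ?_
    rw [le_div_iff₀ hε]
    nlinarith
  by_cases hdl : (d : ℝ) ≤ ℓ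
  · refine le_log_sq hp2 hε hε1 hd1' hdl (by exact_mod_cast hk0) hk10 ?_
    have hkd : (d : ℝ) ≤ k * p ^ 2 := by
      have h1 : 8 * ℓ ≤ k * ε := by rwa [div_le_iff₀ hε] at hk8
      have h2 : (k : ℝ) * ε ≤ k * p ^ 2 := by
        gcongr
        nlinarith
      linarith
    have hkp : 0 < (k : ℝ) * p ^ 2 := by
      have : (0 : ℝ) < k := by exact_mod_cast hk0
      positivity
    -- The weight that balances the two factors of `card_shattered_le`.
    set θ : ℝ := d / (k * p ^ 2) with hθ
    have hθ0 : 0 < θ := div_pos (by linarith) hkp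
    have hθ1 : θ ≤ 1 := (div_le_one hkp).2 hkd
    have hle := card_shattered_le (hd T) hθ0 hθ1
    have hexp : (1 + θ * p ^ 2) ^ T.card ≤ Real.exp d := by
      have h0 : 0 < θ * p ^ 2 := by positivity
      calc (1 + θ * p ^ 2) ^ T.card ≤ (1 + θ * p ^ 2) ^ k :=
            pow_le_pow_right₀ (by linarith) hTk
        _ ≤ Real.exp (θ * p ^ 2) ^ k := by
            gcongr
            have := Real.add_one_le_exp (θ * p ^ 2)
            linarith
        _ = Real.exp d := by
            rw [← Real.exp_nat_mul]
            congr 1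
            rw [hθ]
            field_simp
    have hfin : θ ^ d * (A.card : ℝ) ^ α ≤ Real.exp d :=
      (mul_le_mul_of_nonneg_left hcount (by positivity)).trans (hle.trans hexp)
    have hA0 : (0 : ℝ) < A.card := by linarith
    have hlogs := Real.log_le_log (by positivity) hfin
    rw [Real.log_exp, Real.log_mul (by positivity) (by positivity), Real.log_pow,
      Real.log_rpow hA0] at hlogs
    have hlogθ : Real.log (k * p ^ 2 / d) = -Real.log θ := by
      rw [hθ, ← Real.log_inv, inv_div]
    rw [hlogθ]
    linarith
  · push Not at hdl
    have h1 : 1 ≤ 192 * Real.log (p / ε) ^ 2 := by nlinarith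
    have h2 := mul_le_mul_of_nonneg_right h1 (by linarith : (0 : ℝ) ≤ d)
    linarith

theorem card_le_vc_lattice :
    ∃ C : ℝ, 0 < C ∧
      ∀ (n p : ℕ) (ε q : ℝ) (A : Set (Fin n → ℝ)),
        2 ≤ n → 2 ≤ p → 0 < ε → ε < 1 → 0 < q →
        (∀ x ∈ A, ∀ i, ∃ j : ℕ, 1 ≤ j ∧ j ≤ p ∧ x i = j) →
        (∀ x ∈ A, ∀ y ∈ A, x ≠ y →
          ε * n ≤ ({i : Fin n | q ≤ |x i - y i|} : Set (Fin n)).ncard) →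
        Real.log A.ncard ≤ C * (Real.log (p / ε)) ^ 2 * vcDimPairs A q := by
  classical
  refine ⟨192, by norm_num, fun n p ε q A hn hp hε hε1 hq hlat hsep => ?_⟩
  by_cases hcard : A.ncard < 2
  · have : Real.log A.ncard = 0 := by
      interval_cases A.ncard <;> simp
    rw [this]
    positivity
  have : Nonempty (Fin n) := ⟨⟨0, by omega⟩⟩
  have : Nonempty (Fin p) := ⟨⟨0, by omega⟩⟩
  -- The letter `v : Fin p` stands for the value `v + 1`.
  set val : Fin p → ℝ := fun v => (v : ℝ) + 1 with hval
  have hvalinj : Function.Injective val := by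
    intro a b h
    simpa [hval, Fin.ext_iff] using h
  set g : (Fin n → Fin p) → (Fin n → ℝ) := fun x i => val (x i) with hg
  have hginj : Function.Injective g := fun x y h => funext fun i => hvalinj (congrFun h i)
  set A' : Finset (Fin n → Fin p) := Finset.univ.filter (fun x => g x ∈ A) with hA'
  have himage : A = g '' (A' : Set (Fin n → Fin p)) := by
    ext x
    constructor
    · intro hx
      have : ∀ i, ∃ v : Fin p, val v = x i := by
        intro i
        obtain ⟨j, h1, h2, h3⟩ := hlat x hx i
        refine ⟨⟨j - 1, by omega⟩, ?_⟩
        simp only [hval]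
        rw [h3, Nat.cast_sub h1]
        simp
      choose y hy using this
      have hyx : g y = x := funext hy
      exact ⟨y, by simp [hA', hyx, hx], hyx⟩
    · rintro ⟨y, hy, rfl⟩
      simpa [hA'] using hy
  have hncard : A.ncard = A'.card := by
    rw [himage, Set.ncard_image_of_injective _ hginj, Set.ncard_coe_finset]
  have hcore := log_card_le_of_shattered (R := fun s t => q ≤ |val s - val t|)
    (fun s h => by
      simp only [sub_self, abs_zero] at h
      linarith) (by simpa using hp) hε hε1 A'
    (by omega) (by
      intro x hx y hy hxy
      have := hsep (g x) (Finset.mem_filter.1 hx).2 (g y) (Finset.mem_filter.1 hy).2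
        (hginj.ne hxy)
      rw [Set.ncard_eq_toFinset_card'] at this
      simpa [hg] using this) (vcDimPairs A q) (by
      intro T c hc
      refine le_csSup ⟨n, ?_⟩ ⟨_, rfl, fun i => (c i).elim 0 (fun ab => val ab.1),
        fun i => (c i).elim 0 (fun ab => val ab.2), ?_, ?_⟩
      · rintro m ⟨σ, rfl, -⟩
        simpa using Finset.card_le_univ σ
      · intro i hi
        obtain ⟨ab, hab⟩ := Option.ne_none_iff_exists'.1 (Finset.mem_filter.1 hi).2
        simpa [hab] using (hc.1 i ab hab).2
      · intro z hz
        have : ∀ i, ∃ v : Fin p, ∀ ab, c i = some ab → (val v = z i ∧ (v = ab.1 ∨ v = ab.2)) := by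
          intro i
          by_cases hi : c i = none
          · exact ⟨Classical.arbitrary _, by simp [hi]⟩
          · obtain ⟨ab, hab⟩ := Option.ne_none_iff_exists'.1 hi
            have h := hz i (by simp [hi])
            simp only [hab, Option.elim_some] at h
            rcases h with h | h
            · refine ⟨ab.1, fun ab' h' => ?_⟩
              obtain rfl : ab = ab' := Option.some.inj (hab.symm.trans h')
              exact ⟨h.symm, Or.inl rfl⟩
            · refine ⟨ab.2, fun ab' h' => ?_⟩
              obtain rfl : ab = ab' := Option.some.inj (hab.symm.trans h')
              exact ⟨h.symm, Or.inr rfl⟩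
        choose y hy using this
        obtain ⟨x, hx, hxy⟩ := hc.2 y (fun i ab h => (hy i ab h).2)
        refine ⟨g x, (Finset.mem_filter.1 hx).2, fun i hi => ?_⟩
        have hi' := (Finset.mem_filter.1 hi).2
        obtain ⟨ab, hab⟩ := Option.ne_none_iff_exists'.1 hi'
        simp only [hg]
        rw [hxy i hi', (hy i ab hab).1])
  rw [hncard]
  simpa using hcore
end
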